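/- arXiv:2208.08756 — 2 statements merged into one kernel-verified Lean document; each statement's English description precedes it below -/
import Mathlib

section
/- Let q be a prime power with q not in {2,3,4,5,9}. Then the weak normal covering number of PSL_2(q) equals 2: there exist two proper subgroups H and K of PSL_2(q) such that every element g of PSL_2(q) satisfies phi(g) in H or phi(g) in K for some automorphism phi of PSL_2(q), and no single proper subgroup L of PSL_2(q) has the property that every element of PSL_2(q) is mapped into L by some automorphism. -/
/-- The projective special linear group `PSL_n(F)`: the quotient of `SL_n(F)` by its center. -/
abbrev ProjSL (n : ℕ) (F : Type*) [Field F] : Type _ :=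
  Matrix.SpecialLinearGroup (Fin n) F ⧸
    Subgroup.center (Matrix.SpecialLinearGroup (Fin n) F)


theorem aux_semireg {G X : Type*} [Group G] [Finite G] [MulAction G X] [Finite X]
    (hfix : ∀ (g : G) (k : ℕ) (x : X), g ^ k ≠ 1 → g ^ k • x = x → g • x = x)
    (g : G) (S : Set X) (hS : ∀ s ∈ S, g • s ∈ S) (hfree : ∀ s ∈ S, g • s ≠ s) :
    orderOf g ∣ S.ncard := by
  have hpow : ∀ (k : ℕ), ∀ s ∈ S, g ^ k • s ∈ S := by
    intro k
    induction k with
    | zero => intro s hs; simpa using hs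
    | succ k ih => intro s hs; rw [pow_succ, mul_smul]; exact ih _ (hS s hs)
  let T : SubMulAction (Subgroup.zpowers g) X :=
    { carrier := S
      smul_mem' := by
        rintro ⟨c, hc⟩ x hx
        obtain ⟨k, rfl⟩ := (mem_powers_iff_mem_zpowers).2 hc
        exact hpow k x hx }
  have e := MulAction.selfEquivOrbitsQuotientProd (G := Subgroup.zpowers g) (X := T) (by
    rintro ⟨b, hb⟩
    rw [eq_bot_iff]
    rintro ⟨c, hc⟩ hcb
    obtain ⟨k, rfl⟩ := (mem_powers_iff_mem_zpowers).2 hc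
    rw [MulAction.mem_stabilizer_iff] at hcb
    have h1 : g ^ k • b = b := congrArg Subtype.val hcb
    rw [Subgroup.mem_bot]
    ext
    by_contra hne
    exact hfree b hb (hfix g k b hne h1))
  have h := Nat.card_congr e
  rw [Nat.card_prod, Nat.card_zpowers] at h
  have h2 : S.ncard = Nat.card T := rfl
  rw [h2, h]
  exact dvd_mul_left _ _

theorem aux_fix_dvd {G X : Type*} [Group G] [Finite G] [MulAction G X] [Finite X]
    (hfix : ∀ (g : G) (k : ℕ) (x : X), g ^ k ≠ 1 → g ^ k • x = x → g • x = x)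
    (g : G) : orderOf g ∣ Nat.card X - (MulAction.fixedBy X g).ncard := by
  rw [← Set.ncard_compl]
  apply aux_semireg hfix
  · intro s hs h
    apply hs
    rw [MulAction.mem_fixedBy] at *
    exact smul_left_cancel g h
  · intro s hs h; exact hs h

theorem aux_fix_le {G X : Type*} [Group G] [Finite G] [MulAction G X] [Finite X]
    (h3 : ∀ (g : G) (a b c : X), a ≠ b → a ≠ c → b ≠ c → g • a = a → g • b = b → g • c = c → g = 1)
    (g : G) (hg : g ≠ 1) : (MulAction.fixedBy X g).ncard ≤ 2 := by
  by_contra h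
  push Not at h
  obtain ⟨a, b, c, ha, hb, hc, hab, hac, hbc⟩ := (Set.two_lt_ncard_iff (Set.toFinite _)).1 h
  exact hg (h3 g a b c hab hac hbc ha hb hc)

theorem aux_main {G X : Type*} [Group G] [Finite G] [MulAction G X] [Finite X]
    (hfix : ∀ (g : G) (k : ℕ) (x : X), g ^ k ≠ 1 → g ^ k • x = x → g • x = x)
    (h3 : ∀ (g : G) (a b c : X), a ≠ b → a ≠ c → b ≠ c → g • a = a → g • b = b → g • c = c → g = 1)
    (q p : ℕ) (hX : Nat.card X = q + 1) (hp : p.Prime) (hpq : p ∣ q) (hq : 7 ≤ q)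
    (L : Subgroup G) (u x y : G) (hu : u ∈ L) (hx : x ∈ L) (hy : y ∈ L)
    (ou : orderOf u = p) (ox : q + 1 ∣ 2 * orderOf x) (oy : q - 1 ∣ 2 * orderOf y)
    (P0 P1 : X) (hP : P0 ≠ P1) (t : G) (ot : orderOf t = orderOf y)
    (ht : ∀ g : G, g • P0 = P0 → g • P1 = P1 → g ∈ Subgroup.zpowers t) : L = ⊤ := by
  have hp2 := hp.two_le
  obtain ⟨r, rfl⟩ : ∃ r, q = r + 1 := ⟨q - 1, by omega⟩
  simp only [Nat.add_sub_cancel] at oy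
  have ord_ne : ∀ g : G, 2 ≤ orderOf g → g ≠ 1 := by
    rintro g h rfl; simp at h
  have hx2 := Nat.le_of_dvd (by have := orderOf_pos x; omega) ox
  have hy2 := Nat.le_of_dvd (by have := orderOf_pos y; omega) oy
  have fu := aux_fix_le h3 u (ord_ne u (by omega))
  have fx := aux_fix_le h3 x (ord_ne x (by omega))
  have fy := aux_fix_le h3 y (ord_ne y (by omega))
  have du := aux_fix_dvd hfix u
  have dx := aux_fix_dvd hfix x
  have dy := aux_fix_dvd hfix y
  rw [hX] at du dx dy
  have small : ∀ a b : ℕ, a ∣ b → 0 < b → b < a → False := fun a b h h1 h2 => by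
    have := Nat.le_of_dvd h1 h; omega
  have hp1 : ¬ p ∣ 1 := hp.one_lt.ne' ∘ Nat.dvd_one.1
  have Fu : (MulAction.fixedBy X u).ncard = 1 := by
    rw [ou] at du
    interval_cases h : (MulAction.fixedBy X u).ncard
    · exact absurd ((Nat.dvd_add_right hpq).1 du) hp1
    · rfl
    · exfalso
      have : p ∣ r := du
      exact hp1 ((Nat.dvd_add_right this).1 hpq)
  have Fx : (MulAction.fixedBy X x).ncard = 0 := by
    interval_cases h : (MulAction.fixedBy X x).ncard
    · rfl
    · exfalso
      have h1 : r + 1 + 1 ∣ 2 * (r + 1) := ox.trans (mul_dvd_mul_left 2 dx)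
      have h2 : r + 1 + 1 ∣ 2 := (Nat.dvd_add_right h1).1 (by
        rw [show 2 * (r+1) + 2 = (r + 1 + 1) * 2 by ring]; exact dvd_mul_right _ _)
      exact small _ _ h2 (by omega) (by omega)
    · exfalso
      have h1 : r + 1 + 1 ∣ 2 * r := ox.trans (mul_dvd_mul_left 2 dx)
      have h2 : r + 1 + 1 ∣ 4 := (Nat.dvd_add_right h1).1 (by
        rw [show 2 * r + 4 = (r + 1 + 1) * 2 by ring]; exact dvd_mul_right _ _)
      exact small _ _ h2 (by omega) (by omega)
  have Fy : (MulAction.fixedBy X y).ncard = 2 := by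
    interval_cases h : (MulAction.fixedBy X y).ncard
    · exfalso
      have h1 : r ∣ 2 * (r + 2) := oy.trans (mul_dvd_mul_left 2 dy)
      have h2 : r ∣ 4 := (Nat.dvd_add_right (dvd_mul_right r 2)).1 (by
        rw [show r * 2 + 4 = 2 * (r + 2) by ring]; exact h1)
      exact small _ _ h2 (by omega) (by omega)
    · exfalso
      have h1 : r ∣ 2 * (r + 1) := oy.trans (mul_dvd_mul_left 2 dy)
      have h2 : r ∣ 2 := (Nat.dvd_add_right (dvd_mul_right r 2)).1 (by
        rw [show r * 2 + 2 = 2 * (r + 1) by ring]; exact h1)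
      exact small _ _ h2 (by omega) (by omega)
    · rfl
  rw [Fx] at dx
  rw [Fy] at dy
  -- coprimality
  have cop : ∀ n : ℕ, n ∣ r + 2 ∨ n ∣ r → Nat.Coprime p n := by
    intro n hn
    rw [Nat.Prime.coprime_iff_not_dvd hp]
    intro hpn
    rcases hn with hn | hn
    · exact hp1 ((Nat.dvd_add_right hpq).1 (hpn.trans hn))
    · exact hp1 ((Nat.dvd_add_right (hpn.trans hn)).1 hpq)
  -- fixed point of u
  obtain ⟨P, hPu⟩ := Set.ncard_eq_one.1 Fu
  have uP : u • P = P := by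
    have : P ∈ MulAction.fixedBy X u := by rw [hPu]; rfl
    exact this
  have uP' : ∀ z : X, u • z = z → z = P := by
    intro z hz
    have : z ∈ MulAction.fixedBy X u := hz
    rw [hPu] at this; exact this
  have xF : ∀ z : X, x • z ≠ z := by
    intro z hz
    have h0 := (Set.ncard_eq_zero (Set.toFinite _)).1 Fx
    have : z ∈ MulAction.fixedBy X x := hz
    rw [h0] at this; exact this
  -- transitivity
  have orb : ∀ (M : Subgroup G) (g : G), g ∈ M → ∀ z : X, ∀ s ∈ MulAction.orbit M z,
      g • s ∈ MulAction.orbit M z := by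
    rintro M g hg z _ ⟨m, rfl⟩
    exact ⟨⟨g, hg⟩ * m, by simp [mul_smul, Subgroup.smul_def]⟩
  have trans : ∀ z : X, P ∈ MulAction.orbit L z := by
    intro z
    by_contra hz
    have d1 : p ∣ (MulAction.orbit L z).ncard := by
      rw [← ou]
      apply aux_semireg hfix u _ (orb L u hu z)
      intro s hs h
      rw [uP' s h] at hs
      exact hz hs
    have d2 : orderOf x ∣ (MulAction.orbit L z).ncard :=
      aux_semireg hfix x _ (orb L x hx z) (fun s _ => xF s)
    have d3 := (cop _ (Or.inl dx)).mul_dvd_of_dvd_of_dvd d1 d2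
    have pos : 0 < (MulAction.orbit L z).ncard :=
      (Set.ncard_pos (Set.toFinite _)).2 ⟨z, MulAction.mem_orbit_self z⟩
    have lt : (MulAction.orbit L z).ncard < r + 1 + 1 := by
      rw [← hX, ← Set.ncard_univ]
      apply Set.ncard_lt_ncard _ (Set.toFinite _)
      refine ⟨Set.subset_univ _, fun h => hz (h (Set.mem_univ _))⟩
    have le := Nat.le_of_dvd pos d3
    have := Nat.mul_le_mul_right (orderOf x) hp2
    omega
  obtain ⟨a, b, hab, hFab⟩ := Set.ncard_eq_two.1 Fy
  have ya : y • a = a := by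
    have : a ∈ MulAction.fixedBy X y := by rw [hFab]; simp
    exact this
  have yb : y • b = b := by
    have : b ∈ MulAction.fixedBy X y := by rw [hFab]; simp
    exact this
  have yF : ∀ z : X, y • z = z → z = a ∨ z = b := by
    intro z hz
    have : z ∈ MulAction.fixedBy X y := hz
    rw [hFab] at this; exact this
  obtain ⟨⟨l, hl⟩, hla⟩ := trans a
  have hla : l • a = P := hla
  set c := l • b with hc
  have hcP : P ≠ c := by
    rw [← hla, hc]; intro h; exact hab (smul_left_cancel l h)
  set w := l * y * l⁻¹ with hw
  have wL : w ∈ L := L.mul_mem (L.mul_mem hl hy) (L.inv_mem hl)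
  have ow : orderOf w = orderOf y := orderOf_injective (MulAut.conj l).toMonoidHom (MulAut.conj l).injective y
  have wP : w • P = P := by rw [← hla, hw]; simp [mul_smul, ya]
  have wc : w • c = c := by rw [hc, hw]; simp [mul_smul, yb]
  have wF : ∀ z : X, w • z = z → z = P ∨ z = c := by
    intro z hz
    have : y • (l⁻¹ • z) = l⁻¹ • z := by
      rw [hw, mul_smul, mul_smul] at hz
      exact eq_inv_smul_iff.2 hz
    rcases yF _ this with h | h
    · left; rw [← hla, ← h]; simp
    · right; rw [hc, ← h]; simp
  -- second transitivity
  let S : Subgroup G := L ⊓ MulAction.stabilizer G P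
  have uS : u ∈ S := ⟨hu, uP⟩
  have wS : w ∈ S := ⟨wL, wP⟩
  have trans2 : ∀ z : X, z ≠ P → c ∈ MulAction.orbit S z := by
    intro z hzP
    by_contra hz
    have hPo : P ∉ MulAction.orbit S z := by
      rintro ⟨m, hm⟩
      apply hzP
      have h1 : (m : G) • z = P := hm
      have h2 : (m : G) • P = P := m.2.2
      exact smul_left_cancel (m : G) (h1.trans h2.symm)
    have d1 : p ∣ (MulAction.orbit S z).ncard := by
      rw [← ou]
      apply aux_semireg hfix u _ (orb S u uS z)
      intro s hs h
      rw [uP' s h] at hs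
      exact hPo hs
    have d2 : orderOf y ∣ (MulAction.orbit S z).ncard := by
      rw [← ow]
      apply aux_semireg hfix w _ (orb S w wS z)
      intro s hs h
      rcases wF s h with rfl | rfl
      · exact hPo hs
      · exact hz hs
    have d3 := (cop _ (Or.inr dy)).mul_dvd_of_dvd_of_dvd d1 d2
    have pos : 0 < (MulAction.orbit S z).ncard :=
      (Set.ncard_pos (Set.toFinite _)).2 ⟨z, MulAction.mem_orbit_self z⟩
    have lt : (MulAction.orbit S z).ncard + 2 ≤ r + 1 + 1 := by
      rw [← hX, ← Set.ncard_pair hcP, ← Set.ncard_union_eq _ (Set.toFinite _) (Set.toFinite _),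
        ← Set.ncard_univ]
      · exact Set.ncard_le_ncard (Set.subset_univ _) (Set.toFinite _)
      · rw [Set.disjoint_left]
        rintro s hs (rfl | rfl)
        · exact hPo hs
        · exact hz hs
    have le := Nat.le_of_dvd pos d3
    have := Nat.mul_le_mul_right (orderOf y) hp2
    have e : (MulAction.orbit S z).ncard = r := by omega
    rw [e] at d1
    exact hp1 ((Nat.dvd_add_right d1).1 hpq)
  have two : ∀ A B : X, A ≠ B → ∃ m ∈ L, m • A = P ∧ m • B = c := by
    intro A B hAB
    obtain ⟨⟨m, hm⟩, hmA⟩ := trans A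
    have hmA : m • A = P := hmA
    have : m • B ≠ P := by
      rw [← hmA]; intro h; exact hAB (smul_left_cancel m h).symm
    obtain ⟨⟨n, hn⟩, hnB⟩ := trans2 _ this
    have hnB : n • m • B = c := hnB
    refine ⟨n * m, L.mul_mem hn.1 hm, ?_, ?_⟩
    · rw [mul_smul, hmA]; exact hn.2
    · rw [mul_smul, hnB]
  obtain ⟨m, hm, hm0, hm1⟩ := two P0 P1 hP
  have hm0' : m⁻¹ • P = P0 := by rw [← hm0]; simp
  have hm1' : m⁻¹ • c = P1 := by rw [← hm1]; simp
  set v := m⁻¹ * w * m⁻¹⁻¹ with hv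
  have vL : v ∈ L := L.mul_mem (L.mul_mem (L.inv_mem hm) wL) (L.inv_mem (L.inv_mem hm))
  have ov : orderOf v = orderOf t := by
    rw [ot, ← ow]
    exact orderOf_injective (MulAut.conj m⁻¹).toMonoidHom (MulAut.conj m⁻¹).injective w
  have vt : v ∈ Subgroup.zpowers t := by
    apply ht
    · rw [← hm0', hv]; simp [mul_smul, wP]
    · rw [← hm1', hv]; simp [mul_smul, wc]
  have e1 : Subgroup.zpowers v = Subgroup.zpowers t := by
    apply Subgroup.eq_of_le_of_card_ge
    · rwa [Subgroup.zpowers_le]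
    · rw [Nat.card_zpowers, Nat.card_zpowers, ov]
  rw [eq_top_iff]
  intro g _
  obtain ⟨n, hn, hn0, hn1⟩ := two (g • P0) (g • P1) (fun h => hP (smul_left_cancel g h))
  have key : m⁻¹ * n * g ∈ L := by
    have h1 : m⁻¹ * n * g ∈ Subgroup.zpowers t := by
      apply ht
      · rw [mul_smul, mul_smul, hn0, hm0']
      · rw [mul_smul, mul_smul, hn1, hm1']
    rw [← e1] at h1
    exact (Subgroup.zpowers_le.2 vL) h1
  exact (L.mul_mem_cancel_left (L.mul_mem (L.inv_mem hm) hn)).1 key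

section matrixpart
open Matrix Projectivization
open scoped LinearAlgebra.Projectivization

variable {F : Type*} [Field F]

theorem aux_mk_eq (v w : Fin 2 → F) (hv : v ≠ 0) (hw : w ≠ 0) :
    mk F v hv = mk F w hw ↔ v 0 * w 1 = v 1 * w 0 := by
  rw [mk_eq_mk_iff']
  constructor
  · rintro ⟨a, rfl⟩
    simp; ring
  · intro h
    by_cases h0 : w 0 = 0
    · have h1 : w 1 ≠ 0 := by
        intro h1; apply hw; ext i; fin_cases i <;> simp [h0, h1]
      refine ⟨v 1 / w 1, ?_⟩
      ext i
      fin_cases i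
      · simp only [Fin.zero_eta, Pi.smul_apply, smul_eq_mul]; field_simp; linear_combination -h
      · simp only [Fin.mk_one, Pi.smul_apply, smul_eq_mul]; field_simp
    · refine ⟨v 0 / w 0, ?_⟩
      ext i
      fin_cases i
      · simp only [Fin.zero_eta, Pi.smul_apply, smul_eq_mul]; field_simp
      · simp only [Fin.mk_one, Pi.smul_apply, smul_eq_mul]; field_simp; linear_combination h

theorem aux_fix_iff (M : SpecialLinearGroup (Fin 2) F) (v : Fin 2 → F) (hv : v ≠ 0) :
    (QuotientGroup.mk M : ProjSL 2 F) • mk F v hv = mk F v hv ↔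
      M.1 1 0 * v 0 ^ 2 + (M.1 1 1 - M.1 0 0) * v 0 * v 1 - M.1 0 1 * v 1 ^ 2 = 0 := by
  rw [Matrix.ProjectiveSpecialLinearGroup.smul_proj_mk, smul_mk, aux_mk_eq]
  simp only [Matrix.SpecialLinearGroup.smul_def, Matrix.smul_eq_mulVec, Matrix.mulVec_fin_two]
  simp
  constructor
  · intro h; linear_combination -h
  · intro h; linear_combination -h

theorem aux_one_iff (M : SpecialLinearGroup (Fin 2) F) :
    (QuotientGroup.mk M : ProjSL 2 F) = 1 ↔ (M.1 0 1 = 0 ∧ M.1 1 0 = 0 ∧ M.1 0 0 = M.1 1 1) := by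
  rw [QuotientGroup.eq_one_iff, Matrix.SpecialLinearGroup.mem_center_iff]
  constructor
  · rintro ⟨r, _, h⟩
    rw [← h]; simp
  · rintro ⟨h1, h2, h3⟩
    have hd := M.2
    rw [Matrix.det_fin_two, h1, h3] at hd
    refine ⟨M.1 1 1, by rw [Fintype.card_fin]; linear_combination hd, ?_⟩
    ext i j
    fin_cases i <;> fin_cases j <;> simp [h1, h2, h3]

theorem aux_h3 (g : ProjSL 2 F) (a b c : ℙ F (Fin 2 → F)) (hab : a ≠ b) (hac : a ≠ c)
    (hbc : b ≠ c) (ha : g • a = a) (hb : g • b = b) (hc : g • c = c) : g = 1 := by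
  obtain ⟨M, rfl⟩ := QuotientGroup.mk_surjective g
  induction a using Projectivization.ind with | _ v hv
  induction b using Projectivization.ind with | _ w hw
  induction c using Projectivization.ind with | _ z hz
  rw [aux_fix_iff] at ha hb hc
  rw [Ne, aux_mk_eq, ← sub_eq_zero] at hab hac hbc
  rw [aux_one_iff]
  have key : ∀ A B C : F, A * v 0 ^ 2 + B * v 0 * v 1 - C * v 1 ^ 2 = 0 →
      A * w 0 ^ 2 + B * w 0 * w 1 - C * w 1 ^ 2 = 0 →
      A * z 0 ^ 2 + B * z 0 * z 1 - C * z 1 ^ 2 = 0 → A = 0 ∧ B = 0 ∧ C = 0 := by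
    intro A B C h1 h2 h3
    have hne := mul_ne_zero (mul_ne_zero hab hac) hbc
    refine ⟨?_, ?_, ?_⟩ <;> apply (mul_eq_zero.1 _).resolve_right hne
    · linear_combination (w 0 * z 1 - w 1 * z 0) * w 1 * z 1 * h1 - (v 0 * z 1 - v 1 * z 0) * v 1 * z 1 * h2 + (v 0 * w 1 - v 1 * w 0) * v 1 * w 1 * h3
    · linear_combination -(w 0 * z 1 - w 1 * z 0) * (w 0 * z 1 + w 1 * z 0) * h1 + (v 0 * z 1 - v 1 * z 0) * (v 0 * z 1 + v 1 * z 0) * h2 - (v 0 * w 1 - v 1 * w 0) * (v 0 * w 1 + v 1 * w 0) * h3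
    · linear_combination -(w 0 * z 1 - w 1 * z 0) * w 0 * z 0 * h1 + (v 0 * z 1 - v 1 * z 0) * v 0 * z 0 * h2 - (v 0 * w 1 - v 1 * w 0) * v 0 * w 0 * h3
  obtain ⟨h1, h2, h3⟩ := key _ _ _ ha hb hc
  exact ⟨h3, h1, (sub_eq_zero.1 h2).symm⟩

theorem aux_pow (M : SpecialLinearGroup (Fin 2) F) (k : ℕ) :
    ∃ α β : F, (M ^ k).1 = α • (1 : Matrix (Fin 2) (Fin 2) F) + β • M.1 := by
  induction k with
  | zero => exact ⟨1, 0, by simp⟩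
  | succ k ih =>
    obtain ⟨α, β, h⟩ := ih
    refine ⟨-β, α + β * (M.1 0 0 + M.1 1 1), ?_⟩
    rw [pow_succ, Matrix.SpecialLinearGroup.coe_mul, h]
    have hd := M.2
    rw [Matrix.det_fin_two] at hd
    ext i j
    fin_cases i <;> fin_cases j <;> simp [Matrix.mul_apply, Fin.sum_univ_two]
    · linear_combination -β * hd
    · ring
    · ring
    · linear_combination -β * hd

theorem aux_hfix (g : ProjSL 2 F) (k : ℕ) (x : ℙ F (Fin 2 → F)) (hk : g ^ k ≠ 1)
    (hx : g ^ k • x = x) : g • x = x := by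
  obtain ⟨M, rfl⟩ := QuotientGroup.mk_surjective g
  induction x using Projectivization.ind with | _ v hv
  rw [← QuotientGroup.mk_pow] at hk hx
  rw [aux_fix_iff] at hx ⊢
  rw [Ne, aux_one_iff] at hk
  obtain ⟨α, β, h⟩ := aux_pow M k
  rw [h] at hk hx
  simp at hk hx
  have hβ : β ≠ 0 := by
    rintro rfl; simp at hk
  apply (mul_eq_zero.1 _).resolve_left hβ
  linear_combination hx

def auxT (a : F) (ha : a ≠ 0) : SpecialLinearGroup (Fin 2) F :=
  ⟨!![a, 0; 0, a⁻¹], by simp [ha]⟩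

theorem auxT_mul (a b : F) (ha : a ≠ 0) (hb : b ≠ 0) :
    auxT a ha * auxT b hb = auxT (a * b) (mul_ne_zero ha hb) := by
  apply Subtype.ext
  rw [Matrix.SpecialLinearGroup.coe_mul]
  simp [auxT, mul_comm]

theorem auxT_pow (a : F) (ha : a ≠ 0) (k : ℕ) :
    (auxT a ha) ^ k = auxT (a ^ k) (pow_ne_zero k ha) := by
  induction k with
  | zero => apply Subtype.ext; rw [pow_zero]; simp [auxT, Matrix.one_fin_two]
  | succ k ih => simp only [pow_succ, ih, auxT_mul]

theorem aux_torus [Fintype F] : ∃ t : ProjSL 2 F,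
    Fintype.card F - 1 ∣ 2 * orderOf t ∧
    ∀ g : ProjSL 2 F, g • mk F ![(1 : F), 0] (by simp) = mk F ![(1 : F), 0] (by simp) →
      g • mk F ![(0 : F), 1] (by simp) = mk F ![(0 : F), 1] (by simp) → g ∈ Subgroup.zpowers t := by
  classical
  obtain ⟨ζ, hζ⟩ := IsCyclic.exists_generator (α := Fˣ)
  have oζ : orderOf ζ = Fintype.card F - 1 := by
    rw [orderOf_eq_card_of_forall_mem_zpowers hζ, Nat.card_eq_fintype_card, Fintype.card_units]
  refine ⟨QuotientGroup.mk (auxT (ζ : F) ζ.ne_zero), ?_, ?_⟩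
  · have h := pow_orderOf_eq_one (QuotientGroup.mk (auxT (ζ : F) ζ.ne_zero) : ProjSL 2 F)
    set n := orderOf (QuotientGroup.mk (auxT (ζ : F) ζ.ne_zero) : ProjSL 2 F)
    rw [← QuotientGroup.mk_pow, auxT_pow, aux_one_iff] at h
    simp [auxT] at h
    rw [← oζ]
    apply orderOf_dvd_of_pow_eq_one
    ext
    rw [mul_comm, pow_mul]
    push_cast
    rw [pow_two]
    nth_rewrite 2 [h]
    exact mul_inv_cancel₀ (pow_ne_zero _ ζ.ne_zero)
  · intro g h0 h1
    obtain ⟨M, rfl⟩ := QuotientGroup.mk_surjective g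
    rw [aux_fix_iff] at h0 h1
    simp at h0 h1
    have hd := M.2
    rw [Matrix.det_fin_two, h0, h1] at hd
    simp at hd
    have hne : M.1 0 0 ≠ 0 := left_ne_zero_of_mul_eq_one hd
    obtain ⟨k, hk⟩ := (mem_powers_iff_mem_zpowers).2 (hζ (Units.mk0 _ hne))
    rw [Subgroup.mem_zpowers_iff]
    refine ⟨k, ?_⟩
    rw [zpow_natCast, ← QuotientGroup.mk_pow, auxT_pow]
    congr 1
    have hk' : (ζ : F) ^ k = M.1 0 0 := by
      have := congrArg Units.val hk
      simpa using this
    ext i j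
    fin_cases i <;> fin_cases j <;> simp [auxT, hk', h0, h1]
    exact inv_eq_of_mul_eq_one_right hd

def auxU (a : F) : SpecialLinearGroup (Fin 2) F := ⟨!![1, a; 0, 1], by simp⟩

theorem auxU_pow (a : F) (k : ℕ) : auxU a ^ k = auxU (k * a) := by
  induction k with
  | zero => apply Subtype.ext; rw [pow_zero]; simp [auxU, Matrix.one_fin_two]
  | succ k ih =>
    rw [pow_succ, ih]
    apply Subtype.ext
    rw [Matrix.SpecialLinearGroup.coe_mul]
    simp [auxU]
    ring

theorem auxU_order (p : ℕ) [CharP F p] (hp : p.Prime) :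
    orderOf (QuotientGroup.mk (auxU 1) : ProjSL 2 F) = p := by
  have := Fact.mk hp
  apply orderOf_eq_prime
  · rw [← QuotientGroup.mk_pow, auxU_pow, aux_one_iff]
    simp [auxU]
  · rw [Ne, aux_one_iff]; simp [auxU]


variable {E : Type*} [Field E] [Algebra F E]

theorem aux_scalar (b : Module.Basis (Fin 2) F E) (z : E)
    (h01 : Algebra.leftMulMatrix b z 0 1 = 0) (h10 : Algebra.leftMulMatrix b z 1 0 = 0)
    (h : Algebra.leftMulMatrix b z 0 0 = Algebra.leftMulMatrix b z 1 1) :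
    z = algebraMap F E (Algebra.leftMulMatrix b z 1 1) := by
  apply Algebra.leftMulMatrix_injective b
  rw [AlgHom.commutes]
  ext i j
  fin_cases i <;> fin_cases j <;> simp [h01, h10, h, Matrix.algebraMap_matrix_apply]

theorem aux_gen [Fintype F] [Finite E] (b : Module.Basis (Fin 2) F E) :
    ∃ γ : E, γ ≠ 0 ∧ ∀ k : ℕ, γ ^ k = 1 → (Fintype.card F + 1) * (Fintype.card F - 1) ∣ k := by
  classical
  obtain ⟨ζ, hζ⟩ := IsCyclic.exists_generator (α := Eˣ)
  have := Fintype.ofFinite E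
  have hE : Fintype.card E = Fintype.card F ^ 2 := by
    rw [Module.card_fintype b]; simp
  have oζ : orderOf ζ = (Fintype.card F + 1) * (Fintype.card F - 1) := by
    rw [orderOf_eq_card_of_forall_mem_zpowers hζ, Nat.card_eq_fintype_card, Fintype.card_units, hE,
      ← Nat.sq_sub_sq]
  refine ⟨ζ, ζ.ne_zero, fun k hk => ?_⟩
  rw [← oζ]
  apply orderOf_dvd_of_pow_eq_one
  ext; push_cast; exact hk

theorem aux_nonsplit [Fintype F] [Finite E] (b : Module.Basis (Fin 2) F E) :
    ∃ x : ProjSL 2 F, Fintype.card F + 1 ∣ 2 * orderOf x := by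
  classical
  obtain ⟨γ, hγ0, hγ⟩ := aux_gen b
  have := Module.Basis.finiteDimensional_of_finite b
  have hc : 1 < Fintype.card F := Fintype.one_lt_card
  have hfr : Module.finrank F E = 2 := by rw [Module.finrank_eq_card_basis b]; simp
  have hcE : Nat.card E = Fintype.card F ^ 2 := by
    rw [Module.natCard_eq_pow_finrank (K := F), hfr, Nat.card_eq_fintype_card]
  have hn : (Algebra.leftMulMatrix b (γ ^ (Fintype.card F - 1))).det = 1 := by
    rw [← Algebra.norm_eq_matrix_det]
    have hN : Algebra.norm F γ ≠ 0 := by rwa [Ne, Algebra.norm_eq_zero_iff]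
    rw [map_pow]
    exact FiniteField.pow_card_sub_one_eq_one _ hN
  let M : SpecialLinearGroup (Fin 2) F := ⟨_, hn⟩
  refine ⟨QuotientGroup.mk M, ?_⟩
  have h := pow_orderOf_eq_one (QuotientGroup.mk M : ProjSL 2 F)
  set n := orderOf (QuotientGroup.mk M : ProjSL 2 F)
  have hMn : (M ^ n).1 = Algebra.leftMulMatrix b (γ ^ ((Fintype.card F - 1) * n)) := by
    rw [Matrix.SpecialLinearGroup.coe_pow, pow_mul, map_pow]
  have hd := (M ^ n).2
  rw [← QuotientGroup.mk_pow, aux_one_iff] at h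
  rw [Matrix.det_fin_two] at hd
  obtain ⟨h01, h10, h00⟩ := h
  rw [h01, h00] at hd
  rw [hMn] at h01 h10 h00 hd
  have hs := aux_scalar b _ h01 h10 h00
  have h1 : γ ^ (((Fintype.card F - 1) * n) * 2) = 1 := by
    rw [pow_mul, hs, ← map_pow, pow_two]
    rw [zero_mul, sub_zero] at hd
    rw [hd, map_one]
  have h2 := hγ _ h1
  rw [show (Fintype.card F - 1) * n * 2 = (2 * n) * (Fintype.card F - 1) by ring] at h2
  exact Nat.dvd_of_mul_dvd_mul_right (by omega) h2

/-- The elements commuting with a given matrix. -/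
def auxK (A : Matrix (Fin 2) (Fin 2) F) : Subgroup (SpecialLinearGroup (Fin 2) F) where
  carrier := {M | M.1 * A = A * M.1}
  one_mem' := by simp
  mul_mem' := by
    intro M N hM hN
    simp only [Set.mem_ofPred_eq, Matrix.SpecialLinearGroup.coe_mul] at *
    rw [mul_assoc, hN, ← mul_assoc, hM, mul_assoc]
  inv_mem' := by
    intro M hM
    simp only [Set.mem_ofPred_eq] at *
    have h1 : (M⁻¹).1 * M.1 = 1 := by rw [← Matrix.SpecialLinearGroup.coe_mul]; simp
    have h2 : M.1 * (M⁻¹).1 = 1 := by rw [← Matrix.SpecialLinearGroup.coe_mul]; simp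
    calc (M⁻¹).1 * A = (M⁻¹).1 * A * (M.1 * (M⁻¹).1) := by rw [h2, mul_one]
      _ = (M⁻¹).1 * (A * M.1) * (M⁻¹).1 := by simp only [mul_assoc]
      _ = (M⁻¹).1 * (M.1 * A) * (M⁻¹).1 := by rw [hM]
      _ = ((M⁻¹).1 * M.1) * A * (M⁻¹).1 := by simp only [mul_assoc]
      _ = _ := by rw [h1, one_mul]

theorem auxK_mem (A : Matrix (Fin 2) (Fin 2) F) (M : SpecialLinearGroup (Fin 2) F)
    (h : (QuotientGroup.mk M : ProjSL 2 F) ∈ (auxK A).map (QuotientGroup.mk' (Subgroup.center (SpecialLinearGroup (Fin 2) F)))) :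
    M.1 * A = A * M.1 := by
  obtain ⟨N, hN, hNM⟩ := h
  have hc : N⁻¹ * M ∈ Subgroup.center (SpecialLinearGroup (Fin 2) F) := QuotientGroup.eq.1 hNM
  obtain ⟨r, _, hr⟩ := Matrix.SpecialLinearGroup.mem_center_iff.1 hc
  have hcK : N⁻¹ * M ∈ auxK A := by
    show (N⁻¹ * M).1 * A = A * (N⁻¹ * M).1
    rw [← hr]
    exact Matrix.scalar_commute r (Commute.all r) A
  have : N * (N⁻¹ * M) ∈ auxK A := (auxK A).mul_mem hN hcK
  rw [mul_inv_cancel_left] at this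
  exact this

theorem auxK_ne_top [Fintype F] [Finite E] (b : Module.Basis (Fin 2) F E) (γ : E) (hγ0 : γ ≠ 0)
    (hγ : ∀ k : ℕ, γ ^ k = 1 → (Fintype.card F + 1) * (Fintype.card F - 1) ∣ k) :
    (auxK (Algebra.leftMulMatrix b γ)).map
      (QuotientGroup.mk' (Subgroup.center (SpecialLinearGroup (Fin 2) F))) ≠ ⊤ := by
  intro htop
  have hall : ∀ M : SpecialLinearGroup (Fin 2) F, M.1 * _ = _ * M.1 := fun M =>
    auxK_mem (Algebra.leftMulMatrix b γ) M (by rw [htop]; trivial)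
  have h1 := hall (auxU 1)
  have h2 := hall ⟨!![1, 0; 1, 1], by simp⟩
  set A := Algebra.leftMulMatrix b γ with hA
  have e1 := congrFun (congrFun h1 0) 0
  have e2 := congrFun (congrFun h1 0) 1
  have e3 := congrFun (congrFun h2 0) 0
  simp [auxU, Matrix.mul_apply, Fin.sum_univ_two] at e1 e2 e3
  have hs := aux_scalar b γ (by rw [← hA, e3]) (by rw [← hA, e1]) (by rw [← hA]; linear_combination -e2)
  have hne : A 1 1 ≠ 0 := by
    intro h0
    rw [← hA, h0, map_zero] at hs
    exact hγ0 hs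
  have h3 : γ ^ (Fintype.card F - 1) = 1 := by
    rw [hs, ← map_pow, ← hA, FiniteField.pow_card_sub_one_eq_one _ hne, map_one]
  have h4 := hγ _ h3
  have hc : 1 < Fintype.card F := Fintype.one_lt_card
  have := Nat.le_of_dvd (by omega) h4
  nlinarith [Nat.sub_pos_of_lt hc]

open Polynomial in
theorem aux_root [Fintype F] [Finite E] (b : Module.Basis (Fin 2) F E) (t : F)
    (hirr : ∀ r : F, r ^ 2 - t * r + 1 ≠ 0) :
    ∃ z : E, z ^ 2 - algebraMap F E t * z + 1 = 0 := by
  let f : F[X] := X ^ 2 - C t * X + 1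
  have hdeg : f.natDegree = 2 := by simp only [f]; compute_degree!
  have hir : Irreducible f := by
    rw [Polynomial.irreducible_iff_roots_eq_zero_of_degree_le_three (by omega) (by omega)]
    rw [Multiset.eq_zero_iff_forall_notMem]
    intro r hr
    have := Polynomial.isRoot_of_mem_roots hr
    simp [f, IsRoot] at this
    exact hirr r this
  have := Fact.mk hir
  have hfr : Module.finrank F E = 2 := by rw [Module.finrank_eq_card_basis b]; simp
  have hfa : Module.finrank F (AdjoinRoot f) = 2 := by
    rw [(AdjoinRoot.powerBasis hir.ne_zero).finrank, AdjoinRoot.powerBasis_dim, hdeg]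
  have hfin : Module.Finite F (AdjoinRoot f) := (AdjoinRoot.powerBasis hir.ne_zero).finite
  obtain ⟨φ⟩ := FiniteField.nonempty_algHom_of_finrank_dvd (F := F) (K := AdjoinRoot f) (L := E)
    (by rw [hfr, hfa])
  refine ⟨φ (AdjoinRoot.root f), ?_⟩
  have h := AdjoinRoot.eval₂_root f
  have h' := congrArg φ h
  simp [f] at h'
  rw [← h']
  congr 3
  exact (φ.commutes t).symm

theorem aux_conj [Fintype F] [Finite E] (b : Module.Basis (Fin 2) F E) (γ : E)
    (M : SpecialLinearGroup (Fin 2) F)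
    (hM : ∀ x : ℙ F (Fin 2 → F), (QuotientGroup.mk M : ProjSL 2 F) • x ≠ x) :
    ∃ N : SpecialLinearGroup (Fin 2) F, N * M * N⁻¹ ∈ auxK (Algebra.leftMulMatrix b γ) := by
  have hd := M.2
  rw [Matrix.det_fin_two] at hd
  have hM10 : M.1 1 0 ≠ 0 := by
    intro h
    apply hM (mk F ![(1 : F), 0] (by simp))
    rw [aux_fix_iff]
    simp [h]
  have hirr : ∀ r : F, r ^ 2 - (M.1 0 0 + M.1 1 1) * r + 1 ≠ 0 := by
    intro r hr
    apply hM (mk F ![r - M.1 1 1, M.1 1 0] (by simp [hM10]))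
    rw [aux_fix_iff]
    simp
    linear_combination M.1 1 0 * hr + M.1 1 0 * hd
  obtain ⟨z, hz⟩ := aux_root b _ hirr
  set Z := Algebra.leftMulMatrix b z with hZ
  have hZ2 : Z ^ 2 - (M.1 0 0 + M.1 1 1) • Z + 1 = 0 := by
    have := congrArg (Algebra.leftMulMatrix b) hz
    rw [← Algebra.smul_def] at this
    simpa [← hZ] using this
  have e00 := congrFun (congrFun hZ2 0) 0
  have e01 := congrFun (congrFun hZ2 0) 1
  have e10 := congrFun (congrFun hZ2 1) 0
  have e11 := congrFun (congrFun hZ2 1) 1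
  simp [pow_two, Matrix.mul_apply, Fin.sum_univ_two] at e00 e01 e10 e11
  have hZ10 : Z 1 0 ≠ 0 := by
    intro h
    apply hirr (Z 0 0)
    rw [h] at e00
    linear_combination e00
  have htr : Z 0 0 + Z 1 1 = M.1 0 0 + M.1 1 1 := by
    apply mul_left_cancel₀ hZ10
    linear_combination e10
  have hdet : Z 0 0 * Z 1 1 - Z 0 1 * Z 1 0 = 1 := by
    linear_combination Z 0 0 * htr - e00
  have := Module.Basis.finiteDimensional_of_finite b
  obtain ⟨y, hy⟩ := FiniteField.norm_surjective F E (M.1 1 0 / Z 1 0)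
  rw [Algebra.norm_eq_matrix_det b] at hy
  -- R conjugates M to Z
  let R : Matrix (Fin 2) (Fin 2) F := !![1, (Z 0 0 - M.1 0 0) / M.1 1 0; 0, Z 1 0 / M.1 1 0]
  have hR : R * M.1 = Z * R := by
    ext i j
    fin_cases i <;> fin_cases j <;> simp [R, Matrix.mul_apply, Fin.sum_univ_two] <;> field_simp
    · ring
    · linear_combination -hd - e00
    · linear_combination -htr
  have hRdet : (Algebra.leftMulMatrix b y * R).det = 1 := by
    rw [Matrix.det_mul, hy, Matrix.det_fin_two]
    simp [R]
    field_simp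
  let N : SpecialLinearGroup (Fin 2) F := ⟨_, hRdet⟩
  have hcz : Algebra.leftMulMatrix b y * Z = Z * Algebra.leftMulMatrix b y := by
    rw [hZ, ← map_mul, ← map_mul, mul_comm]
  have hN : N.1 * M.1 = Z * N.1 := by
    show _ * R * M.1 = Z * (_ * R)
    rw [mul_assoc, hR, ← mul_assoc, ← mul_assoc, hcz]
  refine ⟨N, ?_⟩
  have hval : (N * M * N⁻¹).1 = Z := by
    have h2 : N.1 * (N⁻¹).1 = 1 := by rw [← Matrix.SpecialLinearGroup.coe_mul]; simp
    rw [Matrix.SpecialLinearGroup.coe_mul, Matrix.SpecialLinearGroup.coe_mul, hN, mul_assoc, h2,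
      mul_one]
  show (N * M * N⁻¹).1 * _ = _ * (N * M * N⁻¹).1
  rw [hval, hZ, ← map_mul, ← map_mul, mul_comm]

end matrixpart

open scoped LinearAlgebra.Projectivization in
/-- **The weak normal covering number of `PSL₂(q)` equals 2** for every prime power
`q ∉ {2,3,4,5,9}`: there are two proper subgroups `H`, `K` such that every element is
mapped into `H` or `K` by some automorphism, and no single proper subgroup has the
corresponding covering property. -/
theorem gammaW_PSL2_eq_two (q : ℕ) (hq : IsPrimePow q)
    (h2 : q ≠ 2) (h3 : q ≠ 3) (h4 : q ≠ 4) (h5 : q ≠ 5) (h9 : q ≠ 9)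
    (F : Type*) [Field F] [Fintype F] (hF : Fintype.card F = q) :
    (∃ H K : Subgroup (ProjSL 2 F), H ≠ ⊤ ∧ K ≠ ⊤ ∧
        ∀ g : ProjSL 2 F,
          ∃ φ : ProjSL 2 F ≃* ProjSL 2 F, φ g ∈ H ∨ φ g ∈ K) ∧
      ¬ ∃ L : Subgroup (ProjSL 2 F), L ≠ ⊤ ∧
          ∀ g : ProjSL 2 F,
            ∃ φ : ProjSL 2 F ≃* ProjSL 2 F, φ g ∈ L := by
  classical
  obtain ⟨p, hpF⟩ := CharP.exists F
  have hp : p.Prime := CharP.char_is_prime F p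
  have hpf := Fact.mk hp
  have hq2 : 2 ≤ q := hq.two_le
  have h6 : q ≠ 6 := by
    rintro rfl
    obtain ⟨n, _, hn⟩ := FiniteField.card F p
    rw [hF] at hn
    have a2 : 2 ∣ p := Nat.prime_two.dvd_of_dvd_pow (n := (n : ℕ)) (by rw [← hn]; decide)
    have a3 : 3 ∣ p := Nat.prime_three.dvd_of_dvd_pow (n := (n : ℕ)) (by rw [← hn]; decide)
    have b2 := (Nat.prime_dvd_prime_iff_eq Nat.prime_two hp).1 a2
    have b3 := (Nat.prime_dvd_prime_iff_eq Nat.prime_three hp).1 a3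
    omega
  have hq7 : 7 ≤ q := by omega
  have hpq : p ∣ q := by
    rw [← hF]
    exact (CharP.cast_eq_zero_iff F p _).1 (by simp)
  let b : Module.Basis (Fin 2) F (FiniteField.Extension F p 2) :=
    Module.finBasisOfFinrankEq F _ (FiniteField.finrank_extension F p 2)
  have hX : Nat.card (ℙ F (Fin 2 → F)) = q + 1 := by
    rw [Projectivization.card_of_finrank_two F (Fin 2 → F) (by simp), Nat.card_eq_fintype_card, hF]
  have hP : Projectivization.mk F ![(1 : F), 0] (by simp) ≠
      Projectivization.mk F ![(0 : F), 1] (by simp) := by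
    rw [Ne, aux_mk_eq]; simp
  set P0 := Projectivization.mk F ![(1 : F), 0] (by simp) with hP0
  set P1 := Projectivization.mk F ![(0 : F), 1] (by simp) with hP1
  constructor
  · obtain ⟨γ, hγ0, hγ⟩ := aux_gen b
    refine ⟨MulAction.stabilizer (ProjSL 2 F) P0, _, ?_, auxK_ne_top b γ hγ0 hγ, ?_⟩
    · intro htop
      obtain ⟨g, hg⟩ := MulAction.exists_smul_eq (ProjSL 2 F) P0 P1
      have : g ∈ MulAction.stabilizer (ProjSL 2 F) P0 := by rw [htop]; trivial
      exact hP ((MulAction.mem_stabilizer_iff.1 this).symm.trans hg)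
    · intro g
      by_cases hg : ∃ x : ℙ F (Fin 2 → F), g • x = x
      · obtain ⟨x, hx⟩ := hg
        obtain ⟨h, hh⟩ := MulAction.exists_smul_eq (ProjSL 2 F) x P0
        refine ⟨MulAut.conj h, Or.inl ?_⟩
        rw [MulAction.mem_stabilizer_iff, MulAut.conj_apply, ← hh]
        simp [mul_smul, hx]
      · push Not at hg
        obtain ⟨M, rfl⟩ := QuotientGroup.mk_surjective g
        obtain ⟨N, hN⟩ := aux_conj b γ M hg
        exact ⟨MulAut.conj (QuotientGroup.mk N), Or.inr ⟨_, hN, rfl⟩⟩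
  · rintro ⟨L, hL, hcov⟩
    apply hL
    obtain ⟨t, ot, ht⟩ := aux_torus (F := F)
    obtain ⟨x, ox⟩ := aux_nonsplit b
    rw [hF] at ot ox
    obtain ⟨φ, hφ⟩ := hcov t
    obtain ⟨ψ, hψ⟩ := hcov x
    obtain ⟨χ, hχ⟩ := hcov (QuotientGroup.mk (auxU 1))
    exact aux_main aux_hfix aux_h3 q p hX hp hpq hq7 L _ _ _ hχ hψ hφ
      (by rw [MulEquiv.orderOf_eq]; exact auxU_order p hp)
      (by rwa [MulEquiv.orderOf_eq]) (by rwa [MulEquiv.orderOf_eq]) P0 P1 hP t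
      (by rw [MulEquiv.orderOf_eq]) ht
end

section
/- Let q be any prime power. Then the weak normal covering number of PSL_3(q) equals 2: there exist two proper subgroups H and K of PSL_3(q) such that every element g of PSL_3(q) satisfies phi(g) in H or phi(g) in K for some automorphism phi of PSL_3(q), and no single proper subgroup L of PSL_3(q) has the property that every element of PSL_3(q) is mapped into L by some automorphism. -/
section core
open Matrix

variable {F : Type*} [Field F]

theorem W_det_one_add (v f : Fin 3 → F) :
    (1 + vecMulVec v f).det = 1 + f ⬝ᵥ v := by
  rw [vecMulVec_eq Unit, det_one_add_replicateCol_mul_replicateRow]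

/-- transvection -/
def Wtv (v f : Fin 3 → F) (h : f ⬝ᵥ v = 0) : Matrix.SpecialLinearGroup (Fin 3) F :=
  ⟨1 + vecMulVec v f, by rw [W_det_one_add, h, add_zero]⟩

/-- membership of transvection -/
def WS (M : Subgroup (Matrix.SpecialLinearGroup (Fin 3) F)) (v f : Fin 3 → F) : Prop :=
  ∃ h : f ⬝ᵥ v = 0, Wtv v f h ∈ M

theorem Wtv_mulVec (v f w : Fin 3 → F) (h : f ⬝ᵥ v = 0) :
    (Wtv v f h : Matrix (Fin 3) (Fin 3) F) *ᵥ w = w + (f ⬝ᵥ w) • v := by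
  simp [Wtv, add_mulVec, vecMulVec_mulVec]

theorem Wtv_inv_coe (v f : Fin 3 → F) (h : f ⬝ᵥ v = 0) :
    (((Wtv v f h)⁻¹ : Matrix.SpecialLinearGroup (Fin 3) F) : Matrix (Fin 3) (Fin 3) F)
      = 1 - vecMulVec v f := by
  have : (Wtv v f h)⁻¹ = Wtv (-v) f (by simp [h]) := by
    rw [inv_eq_iff_mul_eq_one]
    apply Subtype.ext
    rw [Matrix.SpecialLinearGroup.coe_mul]
    simp [Wtv, add_mul, mul_add, vecMulVec_mul_vecMulVec, h, neg_vecMulVec]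
  rw [this]; simp [Wtv, neg_vecMulVec, sub_eq_add_neg]

theorem WS_add {M : Subgroup (Matrix.SpecialLinearGroup (Fin 3) F)} {v w f : Fin 3 → F}
    (hv : WS M v f) (hw : WS M w f) : WS M (v + w) f := by
  obtain ⟨h1, h2⟩ := hv
  obtain ⟨h3, h4⟩ := hw
  refine ⟨by simp [dotProduct_add, h1, h3], ?_⟩
  convert M.mul_mem h2 h4 using 1
  apply Subtype.ext
  rw [Matrix.SpecialLinearGroup.coe_mul]
  simp [Wtv, add_mul, mul_add, vecMulVec_mul_vecMulVec, h3, add_vecMulVec]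
  abel

theorem WS_neg {M : Subgroup (Matrix.SpecialLinearGroup (Fin 3) F)} {v f : Fin 3 → F}
    (hv : WS M v f) : WS M (-v) f := by
  obtain ⟨h1, h2⟩ := hv
  refine ⟨by simp [h1], ?_⟩
  convert M.inv_mem h2 using 1
  apply Subtype.ext
  rw [Wtv_inv_coe]
  simp [Wtv, neg_vecMulVec, sub_eq_add_neg]

theorem WS_zero {M : Subgroup (Matrix.SpecialLinearGroup (Fin 3) F)} (f : Fin 3 → F) : WS M 0 f := by
  refine ⟨by simp, ?_⟩
  convert M.one_mem using 1
  apply Subtype.ext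
  simp [Wtv]

theorem WS_smul {M : Subgroup (Matrix.SpecialLinearGroup (Fin 3) F)} {v f : Fin 3 → F} {c : F}
    (hc : c ≠ 0) : WS M (c • v) f ↔ WS M v (c • f) := by
  have : ∀ h1 h2, Wtv (c • v) f h1 = Wtv v (c • f) h2 := by
    intro h1 h2
    apply Subtype.ext
    simp [Wtv, smul_vecMulVec, vecMulVec_smul]
  constructor
  · rintro ⟨h1, h2⟩
    have h3 : (c • f) ⬝ᵥ v = 0 := by simpa [smul_dotProduct, dotProduct_smul] using h1
    exact ⟨h3, this h1 h3 ▸ h2⟩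
  · rintro ⟨h1, h2⟩
    have h3 : f ⬝ᵥ (c • v) = 0 := by simpa [smul_dotProduct, dotProduct_smul] using h1
    exact ⟨h3, this h3 h1 ▸ h2⟩

theorem WS_conj {M : Subgroup (Matrix.SpecialLinearGroup (Fin 3) F)} {v f : Fin 3 → F}
    (hv : WS M v f) {g : Matrix.SpecialLinearGroup (Fin 3) F} (hg : g ∈ M) :
    WS M ((g : Matrix (Fin 3) (Fin 3) F) *ᵥ v)
      (f ᵥ* ((g⁻¹ : Matrix.SpecialLinearGroup (Fin 3) F) : Matrix (Fin 3) (Fin 3) F)) := by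
  obtain ⟨h1, h2⟩ := hv
  have e : ((g⁻¹ : Matrix.SpecialLinearGroup (Fin 3) F) : Matrix (Fin 3) (Fin 3) F) *
      (g : Matrix (Fin 3) (Fin 3) F) = 1 := by
    rw [← Matrix.SpecialLinearGroup.coe_mul]; simp
  have e' : (g : Matrix (Fin 3) (Fin 3) F) *
      ((g⁻¹ : Matrix.SpecialLinearGroup (Fin 3) F) : Matrix (Fin 3) (Fin 3) F) = 1 := by
    rw [← Matrix.SpecialLinearGroup.coe_mul]; simp
  refine ⟨by rw [dotProduct_mulVec, vecMul_vecMul, e, vecMul_one, h1], ?_⟩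
  convert M.mul_mem (M.mul_mem hg h2) (M.inv_mem hg) using 1
  apply Subtype.ext
  rw [Matrix.SpecialLinearGroup.coe_mul, Matrix.SpecialLinearGroup.coe_mul]
  simp only [Wtv, mul_add, add_mul, mul_one, e', mul_vecMulVec, vecMulVec_mul]

/-- conj of a transvection by a transvection fixing its center -/
theorem WS_conj_tv {M : Subgroup (Matrix.SpecialLinearGroup (Fin 3) F)} {v f w g : Fin 3 → F}
    (hv : WS M v f) (hw : WS M w g) :
    WS M (w + (f ⬝ᵥ w) • v) (g - (g ⬝ᵥ v) • f) := by
  have := WS_conj hw hv.2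
  rw [Wtv_mulVec, Wtv_inv_coe, vecMul_sub, vecMul_one, vecMul_vecMulVec] at this
  simpa using this

/- cross product linear algebra -/
theorem W_par {v w : Fin 3 → F} (h : v ⨯₃ w = 0) (hv : v ≠ 0) : ∃ c : F, w = c • v := by
  have h1 : ¬ LinearIndependent F ![v, w] := fun h' =>
    crossProduct_ne_zero_iff_linearIndependent.2 h' h
  rw [LinearIndependent.pair_iff' hv] at h1
  push Not at h1
  obtain ⟨a, ha⟩ := h1
  exact ⟨a, ha.symm⟩

theorem W_perp {u v w : Fin 3 → F} (h : v ⨯₃ w ≠ 0) (h1 : u ⬝ᵥ v = 0) (h2 : u ⬝ᵥ w = 0) :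
    ∃ c : F, u = c • (v ⨯₃ w) := by
  apply W_par _ h
  rw [cross_cross_eq_smul_sub_smul]
  simp [dotProduct_comm _ u, h1, h2]

theorem W_par' {u f f' : Fin 3 → F} (hu : u ≠ 0) (h : u ⨯₃ f = 0) (h' : u ⨯₃ f' = 0) :
    f ⨯₃ f' = 0 := by
  obtain ⟨a, rfl⟩ := W_par h hu
  obtain ⟨b, rfl⟩ := W_par h' hu
  simp

theorem W_comm {u v : Fin 3 → F} : u ⨯₃ v = 0 ↔ v ⨯₃ u = 0 := by
  constructor <;> intro h <;> rw [← cross_anticomm, h, neg_zero]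

/-- two functionals vanishing on two independent vectors are parallel -/
theorem W_perp2 {f g v w : Fin 3 → F} (h : v ⨯₃ w ≠ 0) (h1 : f ⬝ᵥ v = 0) (h2 : f ⬝ᵥ w = 0)
    (h3 : g ⬝ᵥ v = 0) (h4 : g ⬝ᵥ w = 0) : f ⨯₃ g = 0 := by
  obtain ⟨a, rfl⟩ := W_perp h h1 h2
  obtain ⟨b, rfl⟩ := W_perp h h3 h4
  simp

theorem W_exists_indep {f v : Fin 3 → F} (hf : f ≠ 0) (hv : v ≠ 0) (h : f ⬝ᵥ v = 0) :
    ∃ w, f ⬝ᵥ w = 0 ∧ v ⨯₃ w ≠ 0 := by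
  obtain ⟨i, hi⟩ := Function.ne_iff.1 hv
  refine ⟨f ⨯₃ Pi.single i 1, by simp, ?_⟩
  rw [cross_cross_eq_smul_sub_smul']
  rw [dotProduct_comm f v] at *
  simp only [h, zero_smul, sub_zero, dotProduct_single, mul_one, ne_eq, smul_eq_zero, hf, or_false]
  exact hi

theorem W_exists_common (f g : Fin 3 → F) : ∃ w, w ≠ 0 ∧ f ⬝ᵥ w = 0 ∧ g ⬝ᵥ w = 0 := by
  by_cases h : f ⨯₃ g = 0
  · by_cases hf : f = 0
    · subst hf
      by_cases hg : g = 0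
      · subst hg
        exact ⟨Pi.single 0 1, by simp, by simp, by simp⟩
      · obtain ⟨i, hi⟩ := Function.ne_iff.1 hg
        by_cases h' : ∀ j, g ⨯₃ Pi.single j 1 = 0
        · obtain ⟨a, ha⟩ := W_par (h' 0) hg
          obtain ⟨b, hb⟩ := W_par (h' 1) hg
          have := W_par' hg (h' 0) (h' 1)
          have := congrFun this 2
          simp [cross_apply] at this
        · push Not at h'
          obtain ⟨j, hj⟩ := h'
          exact ⟨_, hj, by simp, by simp⟩
    · obtain ⟨c, rfl⟩ := W_par h hf
      by_cases h' : ∀ j, f ⨯₃ Pi.single j 1 = 0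
      · have := W_par' hf (h' 0) (h' 1)
        have := congrFun this 2
        simp [cross_apply] at this
      · push Not at h'
        obtain ⟨j, hj⟩ := h'
        exact ⟨_, hj, by simp, by simp⟩
  · exact ⟨_, h, by simp, by simp⟩

variable {M : Subgroup (Matrix.SpecialLinearGroup (Fin 3) F)}

theorem W_exists_ne (f : Fin 3 → F) (hf : f ≠ 0) : ∃ v, v ≠ 0 ∧ f ⬝ᵥ v ≠ 0 := by
  obtain ⟨i, hi⟩ := Function.ne_iff.1 hf
  exact ⟨Pi.single i 1, by simp, by simpa using hi⟩

theorem W_step2 (h1 : ∀ v : Fin 3 → F, v ≠ 0 → ∃ f, f ≠ 0 ∧ WS M v f) :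
    ∃ v f f', v ≠ 0 ∧ WS M v f ∧ WS M v f' ∧ f ⨯₃ f' ≠ 0 := by
  by_contra hcon
  push Not at hcon
  have key : ∀ v f w g, v ≠ 0 → w ≠ 0 → f ≠ 0 → g ≠ 0 → WS M v f → WS M w g →
      f ⬝ᵥ w = 0 → f ⨯₃ g = 0 := by
    intro v f w g hv hw hf hg hvf hwg hfw
    by_cases hgv : g ⬝ᵥ v = 0
    · by_cases hvw : v ⨯₃ w = 0
      · obtain ⟨c, rfl⟩ := W_par hvw hv
        have hc : c ≠ 0 := by rintro rfl; simp at hw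
        rw [WS_smul hc] at hwg
        have := hcon v f _ hv hvf hwg
        simpa [hc] using this
      · exact W_perp2 hvw hvf.1 hfw hgv hwg.1
    · have h2 := WS_conj_tv hvf hwg
      rw [hfw, zero_smul, add_zero] at h2
      have h3 := hcon w _ _ hw hwg h2
      simp [hgv] at h3
      rw [W_comm]; exact h3
  obtain ⟨f0, hf0, hs0⟩ := h1 (Pi.single 0 1) (by simp)
  have h0 : (Pi.single 0 1 : Fin 3 → F) ≠ 0 := by simp
  obtain ⟨v, hv, hfv⟩ := W_exists_ne f0 hf0
  obtain ⟨f, hf, hs⟩ := h1 v hv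
  obtain ⟨w, hw, hw0, hwf⟩ := W_exists_common f0 f
  obtain ⟨g, hg, hsg⟩ := h1 w hw
  have e1 := key _ _ _ _ h0 hw hf0 hg hs0 hsg hw0
  have e2 := key _ _ _ _ hv hw hf hg hs hsg hwf
  have e3 : f ⨯₃ f0 = 0 := W_par' hg (W_comm.1 e2) (W_comm.1 e1)
  obtain ⟨c, rfl⟩ := W_par e3 hf
  have := hs.1
  simp [this] at hfv

theorem W_par_swap {v w : Fin 3 → F} {f : Fin 3 → F} : (v ⨯₃ w ≠ 0) → (w ⨯₃ v ≠ 0) :=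
  fun h h' => h (W_comm.1 h')

theorem W_lincomb {f v w x : Fin 3 → F} (hf : f ≠ 0) (hv : f ⬝ᵥ v = 0) (hw : f ⬝ᵥ w = 0)
    (hvw : v ⨯₃ w ≠ 0) (hx : f ⬝ᵥ x = 0) : ∃ a b : F, x = a • v + b • w := by
  obtain ⟨c, rfl⟩ := W_perp hvw hv hw
  have hc : c ≠ 0 := by rintro rfl; simp at hf
  have hx' : v ⨯₃ w ⬝ᵥ x = 0 := by simpa [hc] using hx
  obtain ⟨y, hy, hy'⟩ := W_exists_ne _ hvw
  have h2 : (v ⨯₃ w) ⨯₃ (x ⨯₃ y) = ((v ⨯₃ w) ⬝ᵥ y) • x := by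
    rw [cross_cross_eq_smul_sub_smul', dotProduct_comm x, hx']
    simp
  have h3 := cross_cross_eq_smul_sub_smul v w (x ⨯₃ y)
  rw [h2] at h3
  refine ⟨-((v ⨯₃ w ⬝ᵥ y)⁻¹ * (w ⬝ᵥ x ⨯₃ y)), (v ⨯₃ w ⬝ᵥ y)⁻¹ * (v ⬝ᵥ x ⨯₃ y), ?_⟩
  have : x = (v ⨯₃ w ⬝ᵥ y)⁻¹ • ((v ⨯₃ w ⬝ᵥ y) • x) := by
    rw [smul_smul, inv_mul_cancel₀ hy', one_smul]
  refine this.trans ?_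
  rw [h3]
  simp only [smul_sub, smul_smul, neg_smul]
  abel

theorem W_step3 [Fintype F]
    (h2 : ∀ v : Fin 3 → F, v ≠ 0 → ∀ f : Fin 3 → F, f ≠ 0 → ∃ g, WS M v g ∧ g ⨯₃ f ≠ 0)
    {f w1 : Fin 3 → F} (hf : f ≠ 0) (hw1 : w1 ≠ 0) (hs : WS M w1 f) :
    ∀ w, f ⬝ᵥ w = 0 → WS M w f := by
  obtain ⟨w2, hfw2, hw12⟩ := W_exists_indep hf hw1 hs.1
  have hfw1 := hs.1
  have hw2 : w2 ≠ 0 := by rintro rfl; simp at hw12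
  have cl : ∀ v, v ≠ 0 → f ⬝ᵥ v = 0 → ∃ g, g ⬝ᵥ v = 0 ∧ g ⨯₃ f ≠ 0 ∧
      ∀ w, WS M w f → WS M ((g ⬝ᵥ w) • v) f := by
    intro v hv hfv
    obtain ⟨g, hg, hgf⟩ := h2 v hv f hf
    refine ⟨g, hg.1, hgf, fun w hw => ?_⟩
    have := WS_conj_tv hg hw
    rw [hfv, zero_smul, sub_zero] at this
    have := WS_add this (WS_neg hw)
    simpa using this
  set A : Set F := {a | WS M (a • w1) f} with hA
  set B : Set F := {a | WS M (a • w2) f} with hB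
  set A' : Set F := {a | ∃ b : F, WS M (a • w1 + b • w2) f} with hA'
  set B' : Set F := {b | ∃ a : F, WS M (a • w1 + b • w2) f} with hB'
  have sA : A ⊆ A' := fun a ha => ⟨0, by rw [zero_smul, add_zero]; exact ha⟩
  have sB : B ⊆ B' := fun a ha => ⟨0, by rw [zero_smul, zero_add]; exact ha⟩
  have c1 : B'.ncard ≤ A.ncard := by
    obtain ⟨g, hg, hgf, hcl⟩ := cl w1 hw1 hfw1
    have hc : g ⬝ᵥ w2 ≠ 0 := fun h => hgf (W_perp2 hw12 hg h hfw1 hfw2)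
    refine Set.ncard_le_ncard_of_injOn (fun b => (g ⬝ᵥ w2) * b) ?_ ?_ (Set.toFinite _)
    · rintro b ⟨a, hab⟩
      have := hcl _ hab
      simp only [dotProduct_add, dotProduct_smul, hg] at this
      simpa [hA, mul_comm] using this
    · intro a _ b _ h
      exact mul_left_cancel₀ hc h
  have c2 : A'.ncard ≤ B.ncard := by
    obtain ⟨g, hg, hgf, hcl⟩ := cl w2 hw2 hfw2
    have hc : g ⬝ᵥ w1 ≠ 0 := fun h => hgf (W_perp2 hw12 h hg hfw1 hfw2)
    refine Set.ncard_le_ncard_of_injOn (fun b => (g ⬝ᵥ w1) * b) ?_ ?_ (Set.toFinite _)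
    · rintro b ⟨a, hab⟩
      have := hcl _ hab
      simp only [dotProduct_add, dotProduct_smul, hg] at this
      simpa [hB, mul_comm] using this
    · intro a _ b _ h
      exact mul_left_cancel₀ hc h
  have c3 := Set.ncard_le_ncard sA (Set.toFinite _)
  have c4 := Set.ncard_le_ncard sB (Set.toFinite _)
  have eA : A = A' := Set.eq_of_subset_of_ncard_le sA (by omega) (Set.toFinite _)
  have negB : ∀ b ∈ B, -b ∈ B := fun b hb => by
    have := WS_neg hb
    simpa [hB] using this
  have hlam : ∀ l : F, l ≠ 0 → ∀ a ∈ A, l * a ∈ B := by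
    intro l hl a ha
    obtain ⟨g, hg, hgf, hcl⟩ := cl (w1 + l • w2) (by
      intro h
      have : w1 = (-l) • w2 := by rw [neg_smul]; exact eq_neg_of_add_eq_zero_left h
      rw [this] at hw12; simp at hw12) (by simp [dotProduct_add, hfw1, hfw2])
    simp only [dotProduct_add, dotProduct_smul, smul_eq_mul] at hg
    have hg1 : g ⬝ᵥ w1 = - (l * (g ⬝ᵥ w2)) := eq_neg_of_add_eq_zero_left hg
    have hc : g ⬝ᵥ w2 ≠ 0 := fun h => hgf (W_perp2 hw12 (by rw [hg1, h]; simp) h hfw1 hfw2)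
    have i1 : ∀ a ∈ A, - ((g ⬝ᵥ w2) * (l * a)) ∈ A := by
      intro a ha
      rw [eA]
      have := hcl _ ha
      rw [dotProduct_smul, hg1, smul_add, smul_smul] at this
      refine ⟨a • -(l * g ⬝ᵥ w2) * l, ?_⟩
      convert this using 3
      simp only [smul_eq_mul]; ring
    have i2 : (fun b => (g ⬝ᵥ w2) * b) '' B = A := by
      apply Set.eq_of_subset_of_ncard_le _ _ (Set.toFinite _)
      · rintro _ ⟨b, hb, rfl⟩
        have := hcl _ hb
        simp only
        rw [eA]
        rw [dotProduct_smul, smul_add, smul_smul] at this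
        refine ⟨b • (g ⬝ᵥ w2) * l, ?_⟩
        convert this using 3
        simp only [smul_eq_mul]; ring
      · rw [Set.ncard_image_of_injective _ (mul_right_injective₀ hc)]
        omega
    have := i1 a ha
    rw [← i2] at this
    obtain ⟨b, hb, hb'⟩ := this
    have : l * a = -b := by
      apply mul_left_cancel₀ hc
      simp only at hb'
      rw [mul_neg, hb', neg_neg]
    rw [this]; exact negB b hb
  have h1A : (1 : F) ∈ A := by simpa [hA] using hs
  have Bu : B = Set.univ := by
    ext x
    simp only [Set.mem_univ, iff_true]
    by_cases hx : x = 0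
    · subst hx; simp [hB, WS_zero]
    · simpa using hlam x hx 1 h1A
  have Au : A = Set.univ := by
    apply Set.eq_of_subset_of_ncard_le (Set.subset_univ _) _ (Set.toFinite _)
    rw [← Bu]; omega
  intro w hw
  obtain ⟨a, b, rfl⟩ := W_lincomb hf hfw1 hfw2 hw12 hw
  have ha : a ∈ A := Au ▸ Set.mem_univ a
  have hb : b ∈ B := Bu ▸ Set.mem_univ b
  exact WS_add ha hb

set_option maxHeartbeats 2000000 in
theorem W_gen (h : ∀ v f : Fin 3 → F, f ⬝ᵥ v = 0 → WS M v f) : M = ⊤ := by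
  have ht : ∀ (i j : Fin 3) (hij : i ≠ j) (a : F), Matrix.SpecialLinearGroup.transvection hij a ∈ M := by
    intro i j hij a
    obtain ⟨h1, h2⟩ := h (Pi.single i a) (Pi.single j 1) (by simp [hij])
    convert h2
    apply Subtype.ext
    rw [Matrix.SpecialLinearGroup.transvection_coe]
    simp [Wtv, single_eq_single_vecMulVec_single]
    ext k l
    simp [vecMulVec_apply, single_apply, Pi.single_apply]
    grind
  rw [eq_top_iff]
  intro g _
  refine Matrix.SpecialLinearGroup.diagonal_transvection_induction' (· ∈ M) g ?_ ht
    (fun A B hA hB => M.mul_mem hA hB)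
  intro i j hij c hc
  have h1 := M.mul_mem (M.mul_mem (ht i j hij c) (ht j i hij.symm (-c⁻¹))) (ht i j hij c)
  have h2 := M.mul_mem (M.mul_mem (ht i j hij (-1)) (ht j i hij.symm 1)) (ht i j hij (-1))
  convert M.mul_mem h1 h2
  apply Subtype.ext
  simp only [Matrix.SpecialLinearGroup.coe_mul, Matrix.SpecialLinearGroup.transvection_coe,
    Matrix.SpecialLinearGroup.diag2n_coe]
  ext k l
  fin_cases i <;> fin_cases j <;> first | exact absurd rfl hij | skip
  all_goals
    fin_cases k <;> fin_cases l <;>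
      simp [Matrix.mul_apply, Fin.sum_univ_three, single_apply, Matrix.one_apply, diagonal_apply,
        hc]

theorem W_core [Fintype F]
    (htr : ∀ v w : Fin 3 → F, v ≠ 0 → w ≠ 0 → ∃ g ∈ M, ∃ c : F, c ≠ 0 ∧
      (g : Matrix (Fin 3) (Fin 3) F) *ᵥ v = c • w)
    (hex : ∃ v f : Fin 3 → F, v ≠ 0 ∧ f ≠ 0 ∧ WS M v f) : M = ⊤ := by
  have vm : ∀ (g : Matrix.SpecialLinearGroup (Fin 3) F) (f : Fin 3 → F),
      (f ᵥ* ((g⁻¹ : Matrix.SpecialLinearGroup (Fin 3) F) : Matrix (Fin 3) (Fin 3) F)) ᵥ*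
        (g : Matrix (Fin 3) (Fin 3) F) = f := by
    intro g f
    rw [vecMul_vecMul, ← Matrix.SpecialLinearGroup.coe_mul]; simp
  have h1 : ∀ v : Fin 3 → F, v ≠ 0 → ∃ f, f ≠ 0 ∧ WS M v f := by
    intro v hv
    obtain ⟨v0, f0, hv0, hf0, hs⟩ := hex
    obtain ⟨g, hg, c, hc, e⟩ := htr v0 v hv0 hv
    have := WS_conj hs hg
    rw [e, WS_smul hc] at this
    refine ⟨_, ?_, this⟩
    intro h0
    have h0 := (smul_eq_zero.1 h0).resolve_left hc
    have := vm g f0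
    rw [h0] at this
    simp at this
    exact hf0 this.symm
  obtain ⟨v0, f0, f1, hv0, hs0, hs1, hff⟩ := W_step2 h1
  have h2 : ∀ v : Fin 3 → F, v ≠ 0 → ∀ f : Fin 3 → F, f ≠ 0 → ∃ g, WS M v g ∧ g ⨯₃ f ≠ 0 := by
    intro v hv f hf
    obtain ⟨g, hg, c, hc, e⟩ := htr v0 v hv0 hv
    have k0 := WS_conj hs0 hg
    have k1 := WS_conj hs1 hg
    rw [e, WS_smul hc] at k0 k1
    by_contra hcon
    push Not at hcon
    have e0 := hcon _ k0
    have e1 := hcon _ k1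
    have := W_par' hf (W_comm.1 e0) (W_comm.1 e1)
    simp only [map_smul, LinearMap.smul_apply, smul_eq_zero, hc, false_or] at this
    apply hff
    have hf00 : f0 ≠ 0 := by rintro rfl; simp at hff
    have n0 : f0 ᵥ* ((g⁻¹ : Matrix.SpecialLinearGroup (Fin 3) F) : Matrix (Fin 3) (Fin 3) F) ≠ 0 := by
      intro h0
      have := vm g f0
      rw [h0] at this
      simp at this
      exact hf00 this.symm
    obtain ⟨a, ha⟩ := W_par this n0
    have e4 : f1 = a • f0 := by
      rw [← vm g f1, ha, smul_vecMul, vm]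
    rw [e4]; simp
  have h3 : ∀ f v, f ≠ 0 → v ≠ 0 → WS M v f → ∀ w, f ⬝ᵥ w = 0 → WS M w f :=
    fun f v hf hv hs => W_step3 h2 hf hv hs
  -- every functional is an axis
  have h4 : ∀ f v, f ≠ 0 → v ≠ 0 → WS M v f → ∀ f', f' ≠ 0 → ∃ w, w ≠ 0 ∧ WS M w f' := by
    intro f v hf hv hs f' hf'
    obtain ⟨w, hw, hfw, hf'w⟩ := W_exists_common f f'
    obtain ⟨g, hg, hgf⟩ := h2 w hw f hf
    -- f' in span of f, g
    obtain ⟨a, b, rfl⟩ := W_lincomb (f := w) hw (by rw [dotProduct_comm]; exact hfw)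
      (by rw [dotProduct_comm]; exact hg.1) (fun h => hgf (W_comm.1 h))
      (by rw [dotProduct_comm]; exact hf'w)
    by_cases hb : b = 0
    · subst hb
      have ha : a ≠ 0 := by rintro rfl; simp at hf'
      refine ⟨w, hw, ?_⟩
      rw [zero_smul, add_zero, ← WS_smul ha]
      exact h3 f v hf hv hs _ (by simp [hfw])
    · obtain ⟨x, hfx, hwx⟩ := W_exists_indep hf hw hfw
      have hgx : g ⬝ᵥ x ≠ 0 := fun h => hgf (W_perp2 hwx hg.1 h hfw hfx)
      set t : F := -(a / b) / (g ⬝ᵥ x) with ht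
      have k := WS_conj_tv (h3 f v hf hv hs (t • x) (by simp [hfx])) hg
      refine ⟨w, hw, ?_⟩
      have e : a • f + b • g = b • (g - (g ⬝ᵥ t • x) • f) := by
        rw [dotProduct_smul, smul_eq_mul, ht, div_mul_cancel₀ _ hgx, smul_sub, smul_smul]
        have : b * -(a / b) = -a := by field_simp
        rw [this, neg_smul, sub_neg_eq_add, add_comm]
      rw [e, ← WS_smul hb]
      rw [hfw, zero_smul, add_zero] at k
      exact h3 _ w (fun h => hf' (by rw [e, h, smul_zero])) hw k _ (by rw [dotProduct_smul, k.1, smul_zero])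
  obtain ⟨v, f, hv, hf, hs⟩ := hex
  apply W_gen
  intro w g hwg
  by_cases hg : g = 0
  · subst hg
    refine ⟨by simp, ?_⟩
    convert M.one_mem using 1
    apply Subtype.ext
    simp [Wtv]
  · obtain ⟨x, hx, hxs⟩ := h4 f v hf hv hs g hg
    exact h3 g x hg hx hxs w hwg

end core

section lifts
open Matrix

variable {F : Type*} [Field F]

theorem W_mk_eq (a b : Matrix.SpecialLinearGroup (Fin 3) F) :
    ((a : ProjSL 3 F) = (b : ProjSL 3 F)) ↔ ∃ z : F, z ^ 3 = 1 ∧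
      (b : Matrix (Fin 3) (Fin 3) F) = z • (a : Matrix (Fin 3) (Fin 3) F) := by
  rw [QuotientGroup.eq, Matrix.SpecialLinearGroup.mem_center_iff]
  simp only [Fintype.card_fin]
  constructor
  · rintro ⟨r, hr, h⟩
    refine ⟨r, hr, ?_⟩
    have : b = a * (a⁻¹ * b) := by group
    rw [this, Matrix.SpecialLinearGroup.coe_mul, ← h, scalar_apply]
    rw [← smul_one_eq_diagonal, mul_smul_comm, mul_one]
  · rintro ⟨r, hr, h⟩
    refine ⟨r, hr, ?_⟩
    rw [Matrix.SpecialLinearGroup.coe_mul, h, mul_smul_comm, ← Matrix.SpecialLinearGroup.coe_mul,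
      inv_mul_cancel, Matrix.SpecialLinearGroup.coe_one, scalar_apply, smul_one_eq_diagonal]

/-- elements with abelian centralizer -/
def WC (x : ProjSL 3 F) : Prop := ∀ a b, a * x = x * a → b * x = x * b → a * b = b * a

theorem WC_map {x : ProjSL 3 F} (φ : ProjSL 3 F ≃* ProjSL 3 F) (h : WC (φ x)) : WC x := by
  intro a b ha hb
  apply φ.injective
  rw [map_mul, map_mul]
  apply h
  · rw [← map_mul, ha, map_mul]
  · rw [← map_mul, hb, map_mul]

theorem W_scalar_nil {c : F} (h : IsNilpotent (c • (1 : Matrix (Fin 3) (Fin 3) F))) : c = 0 := by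
  obtain ⟨k, hk⟩ := h
  rw [smul_pow, one_pow] at hk
  have := congrFun (congrFun hk 0) 0
  simp at this
  exact this.1

theorem W_comm_nil {N a : Matrix (Fin 3) (Fin 3) F} {z : F} (hN : N ^ 3 = 0)
    (ha : IsUnit a) (h : (1 + N) * a = z • (a * (1 + N))) : N * a = a * N := by
  obtain ⟨a, rfl⟩ := ha
  have e : (1 + N) = z • ((a : Matrix (Fin 3) (Fin 3) F) * (1 + N) * ((a⁻¹ : (Matrix (Fin 3) (Fin 3) F)ˣ) : Matrix (Fin 3) (Fin 3) F)) := by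
    rw [← smul_mul_assoc, ← h, mul_assoc, Units.mul_inv, mul_one]
  have e1 : (1 - z) • (1 : Matrix (Fin 3) (Fin 3) F) + N =
      z • ((a : Matrix (Fin 3) (Fin 3) F) * N * ((a⁻¹ : (Matrix (Fin 3) (Fin 3) F)ˣ) : Matrix (Fin 3) (Fin 3) F)) := by
    rw [mul_add, add_mul, mul_one, Units.mul_inv, smul_add] at e
    rw [sub_smul, one_smul, sub_add_eq_add_sub, e, add_sub_cancel_left]
  have n1 : IsNilpotent (z • ((a : Matrix (Fin 3) (Fin 3) F) * N * ((a⁻¹ : (Matrix (Fin 3) (Fin 3) F)ˣ) : Matrix (Fin 3) (Fin 3) F))) := by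
    refine ⟨3, ?_⟩
    rw [smul_pow]
    have : ((a : Matrix (Fin 3) (Fin 3) F) * N * ((a⁻¹ : (Matrix (Fin 3) (Fin 3) F)ˣ) : Matrix (Fin 3) (Fin 3) F)) ^ 3
        = (a : Matrix (Fin 3) (Fin 3) F) * N ^ 3 * ((a⁻¹ : (Matrix (Fin 3) (Fin 3) F)ˣ) : Matrix (Fin 3) (Fin 3) F) := by
      simp only [pow_succ, pow_zero, one_mul, mul_assoc, Units.inv_mul_cancel_left]
    rw [this, hN]; simp
  rw [← e1] at n1
  have n2 : IsNilpotent N := ⟨3, hN⟩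
  have n3 : IsNilpotent ((1 - z) • (1 : Matrix (Fin 3) (Fin 3) F)) := by
    have := Commute.isNilpotent_sub (x := (1 - z) • (1 : Matrix (Fin 3) (Fin 3) F) + N) (y := N)
      (Commute.add_left ((Commute.one_left N).smul_left _) rfl) n1 n2
    simpa using this
  have hz := W_scalar_nil n3
  have hz : z = 1 := (sub_eq_zero.1 hz).symm
  rw [hz, one_smul, add_mul, mul_add, mul_one, one_mul] at h
  exact add_left_cancel h

theorem W_cyc {N : Matrix (Fin 3) (Fin 3) F} (hN : N ^ 3 = 0) (hN2 : N ^ 2 ≠ 0) :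
    ∃ v : Fin 3 → F, ∀ x, ∃ p q r : F, x = p • v + q • (N *ᵥ v) + r • (N ^ 2 *ᵥ v) := by
  have : ∃ v, N ^ 2 *ᵥ v ≠ 0 := by
    by_contra hcon
    push Not at hcon
    apply hN2
    apply Matrix.ext_of_mulVec_single
    intro i
    rw [hcon, zero_mulVec]
  obtain ⟨v, hv⟩ := this
  refine ⟨v, ?_⟩
  have e1 : N *ᵥ (N *ᵥ v) = N ^ 2 *ᵥ v := by rw [mulVec_mulVec, pow_two]
  have e2 : N *ᵥ (N ^ 2 *ᵥ v) = 0 := by rw [mulVec_mulVec, ← pow_succ', hN, zero_mulVec]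
  have li : LinearIndependent F ![v, N *ᵥ v, N ^ 2 *ᵥ v] := by
    rw [Fintype.linearIndependent_iff]
    intro c hc
    simp only [Fin.sum_univ_three, Matrix.cons_val_zero, Matrix.cons_val_one, Matrix.cons_val] at hc
    have h1 := congrArg (fun x => N *ᵥ x) hc
    simp only [mulVec_add, mulVec_smul, e1, e2, smul_zero, add_zero, mulVec_zero] at h1
    have h2 := congrArg (fun x => N *ᵥ x) h1
    simp only [mulVec_add, mulVec_smul, e1, e2, smul_zero, add_zero, mulVec_zero] at h2
    have c0 : c 0 = 0 := (smul_eq_zero.1 h2).resolve_right hv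
    rw [c0, zero_smul, zero_add] at h1 hc
    have c1 : c 1 = 0 := (smul_eq_zero.1 h1).resolve_right hv
    rw [c1, zero_smul, zero_add] at hc
    have c2 : c 2 = 0 := (smul_eq_zero.1 hc).resolve_right hv
    intro i; fin_cases i <;> assumption
  have sp := li.span_eq_top_of_card_eq_finrank' (by simp)
  intro x
  have hx : x ∈ Submodule.span F (Set.range ![v, N *ᵥ v, N ^ 2 *ᵥ v]) := sp ▸ Submodule.mem_top
  rw [Submodule.mem_span_range_iff_exists_fun] at hx
  obtain ⟨c, hc⟩ := hx
  refine ⟨c 0, c 1, c 2, ?_⟩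
  rw [← hc]
  simp [Fin.sum_univ_three]

theorem W_poly {N : Matrix (Fin 3) (Fin 3) F} (hN : N ^ 3 = 0) (hN2 : N ^ 2 ≠ 0)
    {a : Matrix (Fin 3) (Fin 3) F} (ha : N * a = a * N) :
    ∃ p q r : F, a = p • 1 + q • N + r • N ^ 2 := by
  obtain ⟨v, hv⟩ := W_cyc hN hN2
  obtain ⟨p, q, r, h⟩ := hv (a *ᵥ v)
  refine ⟨p, q, r, ?_⟩
  set b := p • 1 + q • N + r • N ^ 2 with hb
  have hbv : b *ᵥ v = a *ᵥ v := by
    rw [h, hb]; simp [add_mulVec, smul_mulVec]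
  have hbN : N * b = b * N := by
    rw [hb]; simp only [mul_add, add_mul, mul_smul, smul_mul_assoc, mul_one, one_mul, pow_two,
      mul_assoc, mul_smul_comm]
  have k : ∀ y, b *ᵥ y = a *ᵥ y → b *ᵥ (N *ᵥ y) = a *ᵥ (N *ᵥ y) := by
    intro y hy
    rw [mulVec_mulVec, mulVec_mulVec, ← ha, ← hbN, ← mulVec_mulVec, hy, mulVec_mulVec]
  apply Matrix.ext_of_mulVec_single
  intro i
  obtain ⟨s, t, u, e⟩ := hv (Pi.single i 1)
  have e1 : N *ᵥ (N *ᵥ v) = N ^ 2 *ᵥ v := by rw [mulVec_mulVec, pow_two]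
  rw [e, ← e1]
  simp only [mulVec_add, mulVec_smul]
  rw [hbv, k v hbv, k _ (k v hbv)]

theorem W_isUnit (a : Matrix.SpecialLinearGroup (Fin 3) F) :
    IsUnit (a : Matrix (Fin 3) (Fin 3) F) := by
  rw [Matrix.isUnit_iff_isUnit_det, a.2]; exact isUnit_one

theorem W_C1 {N : Matrix (Fin 3) (Fin 3) F} (hN : N ^ 3 = 0) (hN2 : N ^ 2 ≠ 0)
    (y : Matrix.SpecialLinearGroup (Fin 3) F) (hy : (y : Matrix (Fin 3) (Fin 3) F) = 1 + N) :
    WC (y : ProjSL 3 F) := by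
  intro a b ha hb
  induction a using QuotientGroup.induction_on with | _ a
  induction b using QuotientGroup.induction_on with | _ b
  have key : ∀ a : Matrix.SpecialLinearGroup (Fin 3) F,
      (a : ProjSL 3 F) * (y : ProjSL 3 F) = (y : ProjSL 3 F) * (a : ProjSL 3 F) →
      ∃ p q r : F, (a : Matrix (Fin 3) (Fin 3) F) = p • 1 + q • N + r • N ^ 2 := by
    intro a ha
    rw [← QuotientGroup.mk_mul, ← QuotientGroup.mk_mul, W_mk_eq] at ha
    obtain ⟨z, _, hz⟩ := ha
    rw [Matrix.SpecialLinearGroup.coe_mul, Matrix.SpecialLinearGroup.coe_mul, hy] at hz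
    exact W_poly hN hN2 (W_comm_nil hN (W_isUnit a) hz)
  obtain ⟨p, q, r, e⟩ := key a ha
  obtain ⟨p', q', r', e'⟩ := key b hb
  rw [← QuotientGroup.mk_mul, ← QuotientGroup.mk_mul]
  congr 1
  apply Subtype.ext
  rw [Matrix.SpecialLinearGroup.coe_mul, Matrix.SpecialLinearGroup.coe_mul, e, e']
  have c1 : Commute (p • (1 : Matrix (Fin 3) (Fin 3) F) + q • N + r • N ^ 2) N := by
    refine Commute.add_left (Commute.add_left ((Commute.one_left N).smul_left _)
      ((Commute.refl N).smul_left _)) (((Commute.refl N).pow_left 2).smul_left _)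
  exact Commute.add_right (Commute.add_right ((Commute.one_right _).smul_right _)
      (c1.smul_right _)) ((c1.pow_right 2).smul_right _)

theorem W_vmv_ne {v f : Fin 3 → F} (hv : v ≠ 0) (hf : f ≠ 0) : vecMulVec v f ≠ 0 := by
  obtain ⟨i, hi⟩ := Function.ne_iff.1 hv
  obtain ⟨j, hj⟩ := Function.ne_iff.1 hf
  intro h
  have := congrFun (congrFun h i) j
  simp [vecMulVec_apply] at this
  tauto

theorem W_C2 {v f : Fin 3 → F} (hv : v ≠ 0) (hf : f ≠ 0) (h : f ⬝ᵥ v = 0) :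
    ¬ WC (Wtv v f h : ProjSL 3 F) := by
  intro hC
  obtain ⟨w, hfw, hvw⟩ := W_exists_indep hf hv h
  obtain ⟨g, hgv, hfg⟩ := W_exists_indep hv hf (by rw [dotProduct_comm]; exact h)
  rw [dotProduct_comm] at hgv
  have hgw : g ⬝ᵥ w ≠ 0 := fun h' => hfg (W_perp2 hvw h hfw hgv h')
  have hc := hC (Wtv v g hgv) (Wtv w f hfw) (by
    rw [← QuotientGroup.mk_mul, ← QuotientGroup.mk_mul]
    congr 1
    apply Subtype.ext
    rw [Matrix.SpecialLinearGroup.coe_mul, Matrix.SpecialLinearGroup.coe_mul]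
    simp [Wtv, add_mul, mul_add, vecMulVec_mul_vecMulVec, h, hgv]
    abel) (by
    rw [← QuotientGroup.mk_mul, ← QuotientGroup.mk_mul]
    congr 1
    apply Subtype.ext
    rw [Matrix.SpecialLinearGroup.coe_mul, Matrix.SpecialLinearGroup.coe_mul]
    simp [Wtv, add_mul, mul_add, vecMulVec_mul_vecMulVec, h, hfw]
    abel)
  rw [← QuotientGroup.mk_mul, ← QuotientGroup.mk_mul, W_mk_eq] at hc
  obtain ⟨z, _, hz⟩ := hc
  rw [Matrix.SpecialLinearGroup.coe_mul, Matrix.SpecialLinearGroup.coe_mul] at hz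
  have h1 := congrArg (fun A => A *ᵥ v) hz
  simp only [← mulVec_mulVec, smul_mulVec, Wtv_mulVec, h, hgv, zero_smul, add_zero] at h1
  have hz1 : z = 1 := by
    obtain ⟨i, hi⟩ := Function.ne_iff.1 hv
    have := congrFun h1 i
    simp only [Pi.smul_apply, smul_eq_mul] at this
    exact (mul_right_cancel₀ hi (by rw [one_mul]; exact this)).symm
  rw [hz1, one_smul] at hz
  simp only [Wtv, add_mul, mul_add, vecMulVec_mul_vecMulVec, h, one_mul, mul_one] at hz
  have : (g ⬝ᵥ w) • vecMulVec v f = 0 := by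
    have h3 := sub_eq_zero.2 hz
    simp only [vecMulVec_smul, zero_smul, vecMulVec_zero] at h3
    rw [← neg_eq_zero, ← h3]
    abel
  exact W_vmv_ne hv hf ((smul_eq_zero.1 this).resolve_left hgw)

theorem W_lift {p : ℕ} [Fact p.Prime] [CharP F p] [Fintype F] (z : ProjSL 3 F) (hz : z ^ p = 1) :
    ∃ (y : Matrix.SpecialLinearGroup (Fin 3) F) (N : Matrix (Fin 3) (Fin 3) F),
      (y : ProjSL 3 F) = z ∧ (y : Matrix (Fin 3) (Fin 3) F) = 1 + N ∧ N ^ 3 = 0 := by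
  induction z using QuotientGroup.induction_on with | _ x
  have hz' : ((1 : Matrix.SpecialLinearGroup (Fin 3) F) : ProjSL 3 F) =
    ((x ^ p : Matrix.SpecialLinearGroup (Fin 3) F) : ProjSL 3 F) := by
    rw [QuotientGroup.mk_pow, hz]; rfl
  rw [W_mk_eq] at hz'
  obtain ⟨c, _, hc⟩ := hz'
  rw [Matrix.SpecialLinearGroup.coe_pow, Matrix.SpecialLinearGroup.coe_one] at hc
  obtain ⟨m, rfl⟩ : ∃ m : F, m ^ p = c := by
    have : Function.Surjective (frobenius F p) := Finite.injective_iff_surjective.1 (frobenius_inj F p)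
    obtain ⟨m, hm⟩ := this c
    exact ⟨m, hm⟩
  have n1 : IsNilpotent ((x : Matrix (Fin 3) (Fin 3) F) - m • 1) := by
    refine ⟨p, ?_⟩
    rw [sub_pow_char_of_commute p ((Commute.one_right _).smul_right _), hc, smul_pow, one_pow,
      sub_self]
  set N0 := (x : Matrix (Fin 3) (Fin 3) F) - m • 1 with hN0
  have hx : (x : Matrix (Fin 3) (Fin 3) F) = m • 1 + N0 := by rw [hN0]; abel
  have hch : N0.charpoly = Polynomial.X ^ 3 := by
    have := (Matrix.isNilpotent_charpoly_sub_pow_of_isNilpotent n1).eq_zero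
    rw [sub_eq_zero] at this
    simpa using this
  have n3 : N0 ^ 3 = 0 := by
    have := Matrix.aeval_self_charpoly N0
    rw [hch] at this
    simpa using this
  have hdet : m ^ 3 = 1 := by
    have h1 := Matrix.eval_charpoly N0 (-m)
    rw [hch] at h1
    have h2 : (scalar (Fin 3)) (-m) - N0 = -(x : Matrix (Fin 3) (Fin 3) F) := by
      rw [hx, scalar_apply, ← smul_one_eq_diagonal, neg_smul]; abel
    rw [h2, det_neg, x.2] at h1
    simp at h1
    have := neg_eq_iff_eq_neg.1 ((Odd.neg_pow (by decide) m).symm.trans h1)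
    rw [this]; norm_num
  have hm : m ≠ 0 := by rintro rfl; simp at hdet
  refine ⟨⟨1 + m⁻¹ • N0, ?_⟩, m⁻¹ • N0, ?_, rfl, ?_⟩
  · have : (1 : Matrix (Fin 3) (Fin 3) F) + m⁻¹ • N0 = m⁻¹ • (x : Matrix (Fin 3) (Fin 3) F) := by
      rw [hx, smul_add, smul_smul, inv_mul_cancel₀ hm, one_smul]
    rw [this, det_smul, x.2]
    simp [hdet]
  · refine (W_mk_eq _ _).2 ⟨m, hdet, ?_⟩
    refine hx.trans ?_
    simp [smul_smul, hm]
  · rw [smul_pow, n3, smul_zero]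

/-- two independent kernel vectors -/
theorem W_rank1 {N : Matrix (Fin 3) (Fin 3) F} {u w : Fin 3 → F} (h : u ⨯₃ w ≠ 0)
    (hu : N *ᵥ u = 0) (hw : N *ᵥ w = 0) : ∃ a f, N = vecMulVec a f := by
  have : ∀ i, ∃ c : F, N i = c • (u ⨯₃ w) := fun i =>
    W_perp h (congrFun hu i) (congrFun hw i)
  choose a ha using this
  refine ⟨a, u ⨯₃ w, ?_⟩
  ext i j
  rw [ha i, vecMulVec_apply]; simp

theorem W_rank1' {N : Matrix (Fin 3) (Fin 3) F} (hN : N ^ 2 = 0) :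
    ∃ a f, N = vecMulVec a f := by
  have hk : ∀ x, N *ᵥ (N *ᵥ x) = 0 := fun x => by
    rw [mulVec_mulVec, ← pow_two, hN, zero_mulVec]
  by_cases h0 : N = 0
  · exact ⟨0, 0, by simp [h0]⟩
  have : ∃ v, N *ᵥ v ≠ 0 := by
    by_contra hcon
    push Not at hcon
    apply h0
    apply Matrix.ext_of_mulVec_single
    intro i
    rw [hcon, zero_mulVec]
  obtain ⟨v, hv⟩ := this
  by_cases hp : ∀ x, (N *ᵥ v) ⨯₃ (N *ᵥ x) = 0
  · have : ∀ j, ∃ c : F, N *ᵥ (Pi.single j 1) = c • (N *ᵥ v) := fun j => W_par (hp _) hv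
    choose c hc using this
    refine ⟨N *ᵥ v, c, ?_⟩
    ext i j
    have := congrFun (hc j) i
    simp only [mulVec_single_one, Matrix.col_apply, Pi.smul_apply, smul_eq_mul] at this
    rw [this, vecMulVec_apply, mul_comm]
  · push Not at hp
    obtain ⟨x, hx⟩ := hp
    exact W_rank1 hx (hk v) (hk x)

theorem W_tv_of_rank1 {y : Matrix.SpecialLinearGroup (Fin 3) F} {a f : Fin 3 → F}
    (h : (y : Matrix (Fin 3) (Fin 3) F) = 1 + vecMulVec a f) (hy : (y : ProjSL 3 F) ≠ 1) :
    ∃ h' : f ⬝ᵥ a = 0, a ≠ 0 ∧ f ≠ 0 ∧ y = Wtv a f h' := by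
  have h1 : f ⬝ᵥ a = 0 := by
    have := W_det_one_add a f
    rw [← h, y.2] at this
    simpa using this.symm
  have h2 : y = Wtv a f h1 := Subtype.ext h
  have h3 : y ≠ 1 := by rintro rfl; exact hy rfl
  refine ⟨h1, ?_, ?_, h2⟩
  · rintro rfl
    exact h3 (Subtype.ext (by rw [h]; simp))
  · rintro rfl
    exact h3 (Subtype.ext (by rw [h]; simp))

theorem W_ne_one {x : ProjSL 3 F} (h : ¬ WC x) : x ≠ 1 ∨ ∃ a b : ProjSL 3 F, a * b ≠ b * a := by
  right
  unfold WC at h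
  push Not at h
  obtain ⟨a, b, _, _, h⟩ := h
  exact ⟨a, b, h⟩

theorem W_tv_ne_one {v f : Fin 3 → F} (hv : v ≠ 0) (hf : f ≠ 0) (h : f ⬝ᵥ v = 0) :
    (Wtv v f h : ProjSL 3 F) ≠ 1 := by
  intro h1
  have h1 := h1.symm
  rw [← QuotientGroup.mk_one, W_mk_eq] at h1
  obtain ⟨z, _, hz⟩ := h1
  have h2 := congrArg (fun A => A *ᵥ v) hz
  simp only [Wtv_mulVec, h, zero_smul, add_zero, smul_mulVec, Matrix.SpecialLinearGroup.coe_one,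
    one_mulVec] at h2
  have hz1 : z = 1 := by
    obtain ⟨i, hi⟩ := Function.ne_iff.1 hv
    have := congrFun h2 i
    simp only [Pi.smul_apply, smul_eq_mul] at this
    exact (mul_right_cancel₀ hi (by rw [one_mul]; exact this)).symm
  rw [hz1, one_smul] at hz
  simp only [Wtv, Matrix.SpecialLinearGroup.coe_one] at hz
  exact W_vmv_ne hv hf (by simpa using hz)

theorem W_tv_pow {p : ℕ} [CharP F p] {v f : Fin 3 → F} (h : f ⬝ᵥ v = 0) : (Wtv v f h) ^ p = 1 := by
  apply Subtype.ext
  have : ∀ n : ℕ, ((Wtv v f h ^ n : Matrix.SpecialLinearGroup (Fin 3) F) : Matrix (Fin 3) (Fin 3) F)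
      = 1 + (n : F) • vecMulVec v f := by
    intro n
    induction n with
    | zero => simp
    | succ k ih =>
      rw [pow_succ, Matrix.SpecialLinearGroup.coe_mul, ih]
      simp only [Wtv, add_mul, mul_add, vecMulVec_mul_vecMulVec, h, one_mul, mul_one,
        smul_mul_assoc, zero_smul, Nat.cast_succ, add_smul, one_smul]
      simp
      abel
  rw [this]
  simp

/-- part B -/
theorem W_partB [Fintype F] (L : Subgroup (ProjSL 3 F))
    (hL : ∀ g : ProjSL 3 F, ∃ φ : ProjSL 3 F ≃* ProjSL 3 F, φ g ∈ L) :
    ∃ v f : Fin 3 → F, v ≠ 0 ∧ f ≠ 0 ∧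
      WS (L.comap (QuotientGroup.mk' (Subgroup.center _))) v f := by
  obtain ⟨p, hp⟩ := CharP.exists F
  haveI : Fact p.Prime := ⟨CharP.char_is_prime F p⟩
  have hv : (Pi.single 0 1 : Fin 3 → F) ≠ 0 := by simp
  have hf : (Pi.single 1 1 : Fin 3 → F) ≠ 0 := by simp
  have h0 : (Pi.single 1 1 : Fin 3 → F) ⬝ᵥ (Pi.single 0 1 : Fin 3 → F) = 0 := by simp
  obtain ⟨φ, hφ⟩ := hL (Wtv _ _ h0 : ProjSL 3 F)
  obtain ⟨y, N, h1, h2, h3⟩ := W_lift (p := p) (φ (Wtv _ _ h0 : ProjSL 3 F)) (by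
    rw [← map_pow, ← QuotientGroup.mk_pow, W_tv_pow, QuotientGroup.mk_one, map_one])
  have h4 : N ^ 2 = 0 := by
    by_contra hN
    have := W_C1 h3 hN y h2
    rw [h1] at this
    exact W_C2 hv hf h0 (WC_map φ this)
  obtain ⟨a, f, rfl⟩ := W_rank1' h4
  obtain ⟨h', ha, hf', e⟩ := W_tv_of_rank1 h2 (by
    rw [h1]; intro h
    exact W_tv_ne_one hv hf h0 (by simpa using h))
  refine ⟨a, f, ha, hf', h', ?_⟩
  rw [← e, Subgroup.mem_comap]
  rw [← h1] at hφ
  exact hφ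

end lifts

section counting
open Matrix
open scoped LinearAlgebra.Projectivization

variable {F : Type*} [Field F]

theorem W_smul_iff (g : Matrix.SpecialLinearGroup (Fin 3) F) {v w : Fin 3 → F} (hv : v ≠ 0)
    (hw : w ≠ 0) : g • Projectivization.mk F v hv = Projectivization.mk F w hw ↔
      ∃ c : F, c ≠ 0 ∧ (g : Matrix (Fin 3) (Fin 3) F) *ᵥ v = c • w := by
  rw [Projectivization.smul_mk, Projectivization.mk_eq_mk_iff']
  constructor
  · rintro ⟨a, ha⟩
    refine ⟨a, ?_, ha.symm⟩
    rintro rfl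
    rw [zero_smul] at ha
    exact (smul_ne_zero_iff_ne g).mpr hv ha.symm
  · rintro ⟨a, _, ha⟩
    exact ⟨a, ha.symm⟩

theorem W_card_GL [Fintype F] : Nat.card (GL (Fin 3) F) =
    (Fintype.card F ^ 2 + Fintype.card F + 1) *
      (Fintype.card F ^ 3 * (Fintype.card F - 1) ^ 3 * (Fintype.card F + 1)) := by
  rw [Matrix.card_GL_field]
  obtain ⟨t, ht⟩ : ∃ t, Fintype.card F = t + 1 := ⟨Fintype.card F - 1, by
    have := Fintype.card_pos (α := F); omega⟩
  rw [Fin.prod_univ_three, ht]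
  simp only [Fin.val_zero, Fin.val_one, Fin.val_two, pow_zero, pow_one, Nat.add_sub_cancel]
  have e0 : (t + 1) ^ 3 - 1 = t * ((t + 1) ^ 2 + (t + 1) + 1) :=
    Nat.sub_eq_of_eq_add (by ring)
  have e1 : (t + 1) ^ 3 - (t + 1) = (t + 1) * t * (t + 1 + 1) :=
    Nat.sub_eq_of_eq_add (by ring)
  have e2 : (t + 1) ^ 3 - (t + 1) ^ 2 = (t + 1) ^ 2 * t :=
    Nat.sub_eq_of_eq_add (by ring)
  rw [e0, e1, e2]; ring

theorem W_toGL_inj : Function.Injective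
    (Matrix.SpecialLinearGroup.toGL : Matrix.SpecialLinearGroup (Fin 3) F →* GL (Fin 3) F) := by
  intro a b h
  apply Subtype.ext
  exact congrArg Units.val h

theorem W_card_SL_dvd [Fintype F] : Nat.card (Matrix.SpecialLinearGroup (Fin 3) F) ∣
    Nat.card (GL (Fin 3) F) :=
  Subgroup.card_dvd_of_injective _ W_toGL_inj

theorem W_card_SL_dvd' [Fintype F] : Nat.card (GL (Fin 3) F) ∣
    Nat.card (Matrix.SpecialLinearGroup (Fin 3) F) * (Fintype.card F - 1) := by
  have h1 := (Matrix.GeneralLinearGroup.det (n := Fin 3) (R := F)).ker.card_mul_index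
  rw [Subgroup.index_ker] at h1
  have h2 : (Matrix.GeneralLinearGroup.det (n := Fin 3) (R := F)).ker =
      (Matrix.SpecialLinearGroup.toGL : Matrix.SpecialLinearGroup (Fin 3) F →* GL (Fin 3) F).range := by
    ext g
    rw [MonoidHom.mem_ker, MonoidHom.mem_range]
    constructor
    · intro h
      refine ⟨⟨g.1, ?_⟩, ?_⟩
      · have := congrArg Units.val h
        simpa using this
      · apply Units.ext; rfl
    · rintro ⟨s, rfl⟩
      simp
  rw [h2, ← Nat.card_congr (MonoidHom.ofInjective W_toGL_inj).toEquiv] at h1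
  rw [← h1]
  apply mul_dvd_mul_left
  have := Subgroup.card_subgroup_dvd_card (Matrix.GeneralLinearGroup.det (n := Fin 3) (R := F)).range
  rwa [Nat.card_units, Nat.card_eq_fintype_card (α := F)] at this

theorem W_card_P [Fintype F] : Nat.card (ℙ F (Fin 3 → F)) =
    Fintype.card F ^ 2 + Fintype.card F + 1 := by
  rw [Projectivization.card_of_finrank F _ (n := 3) (by simp)]
  simp [Finset.sum_range_succ]
  ring

instance [Fintype F] : Finite (Matrix.SpecialLinearGroup (Fin 3) F) :=
  Finite.of_injective _ W_toGL_inj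

theorem W_stab_dvd [Fintype F] (P : ℙ F (Fin 3 → F)) :
    Nat.card (MulAction.stabilizer (Matrix.SpecialLinearGroup (Fin 3) F) P) ∣
      (Fintype.card F ^ 3 * (Fintype.card F - 1) ^ 3 * (Fintype.card F + 1)) := by
  have h1 := (MulAction.stabilizer (Matrix.SpecialLinearGroup (Fin 3) F) P).card_mul_index
  haveI : MulAction.IsPretransitive (Matrix.SpecialLinearGroup (Fin 3) F) (ℙ F (Fin 3 → F)) :=
    inferInstance
  rw [MulAction.index_stabilizer_of_transitive, W_card_P, mul_comm] at h1
  have h2 := W_card_SL_dvd (F := F)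
  rw [W_card_GL, ← h1] at h2
  exact Nat.dvd_of_mul_dvd_mul_left (by positivity) h2

theorem W_orbit_dvd [Fintype F] (M : Subgroup (Matrix.SpecialLinearGroup (Fin 3) F)) (n : ℕ)
    (hn : n ∣ Nat.card M) (hN : n ∣ Fintype.card F ^ 2 + Fintype.card F + 1)
    (hq : n.Coprime (Fintype.card F - 1)) (P : ℙ F (Fin 3 → F)) :
    n ∣ Nat.card (MulAction.orbit M P) := by
  have h1 := (MulAction.stabilizer M P).card_mul_index
  rw [MulAction.index_stabilizer] at h1
  have h2 : Nat.card (MulAction.stabilizer M P) ∣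
      Nat.card (MulAction.stabilizer (Matrix.SpecialLinearGroup (Fin 3) F) P) := by
    refine Subgroup.card_dvd_of_injective
      ({ toFun := fun x => ⟨x.1.1, x.2⟩, map_one' := rfl, map_mul' := fun _ _ => rfl } :
      MulAction.stabilizer M P →* MulAction.stabilizer (Matrix.SpecialLinearGroup (Fin 3) F) P) ?_
    intro a b h
    have h' : a.1.1 = b.1.1 := congrArg (fun z => z.1) h
    exact Subtype.ext (Subtype.ext h')
  have h3 := h2.trans (W_stab_dvd P)
  have e : Fintype.card F ^ 2 + Fintype.card F + 1 = Fintype.card F * (Fintype.card F + 1) + 1 := by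
    ring
  rw [e] at hN
  have c1 : n.Coprime (Fintype.card F) := by
    apply Nat.Coprime.coprime_dvd_left hN
    simp [Nat.coprime_mul_right_add_left]
  have c2 : n.Coprime (Fintype.card F + 1) := by
    apply Nat.Coprime.coprime_dvd_left hN
    simp [Nat.coprime_mul_left_add_left]
  have c : n.Coprime (Nat.card (MulAction.stabilizer M P)) := by
    apply Nat.Coprime.coprime_dvd_right h3
    exact ((c1.pow_right 3).mul_right (hq.pow_right 3)).mul_right c2
  rw [← h1] at hn
  exact c.dvd_of_dvd_mul_left hn

theorem W_ord [Fintype F] (L : Subgroup (ProjSL 3 F))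
    (hL : ∀ g : ProjSL 3 F, ∃ φ : ProjSL 3 F ≃* ProjSL 3 F, φ g ∈ L) (g : ProjSL 3 F) :
    orderOf g ∣ Nat.card (L.comap (QuotientGroup.mk' (Subgroup.center
      (Matrix.SpecialLinearGroup (Fin 3) F)))) := by
  obtain ⟨φ, hφ⟩ := hL g
  have h1 : orderOf g = orderOf (⟨φ g, hφ⟩ : L) := by
    rw [← Subgroup.orderOf_coe]; exact (φ.orderOf_eq g).symm
  rw [h1]
  refine (orderOf_dvd_natCard _).trans ?_
  have h2 := Subgroup.map_comap_eq_self_of_surjective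
    (QuotientGroup.mk'_surjective (Subgroup.center (Matrix.SpecialLinearGroup (Fin 3) F))) L
  conv_lhs => rw [← h2]
  exact Subgroup.card_map_dvd _ _

/-- two fixed points -/
theorem W_two_fixed [Fintype F] (M : Subgroup (Matrix.SpecialLinearGroup (Fin 3) F)) (n : ℕ)
    (hn : n ∣ Nat.card M) (hN : n = Fintype.card F ^ 2 + Fintype.card F + 1 ∨
      3 * n = Fintype.card F ^ 2 + Fintype.card F + 1)
    (hq : n.Coprime (Fintype.card F - 1)) (P Q : ℙ F (Fin 3 → F))
    (hPQ : Q ∉ MulAction.orbit M P) (l : ℕ) (hl : l.Prime) (hl2 : l ≠ 2)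
    (hlN : ¬ l ∣ Fintype.card F ^ 2 + Fintype.card F + 1)
    (x : Matrix.SpecialLinearGroup (Fin 3) F) (hx : x ∈ M) (hxl : x ^ l = 1) :
    ∃ A B : ℙ F (Fin 3 → F), A ≠ B ∧ x • A = A ∧ x • B = B := by
  have hN' : n ∣ Fintype.card F ^ 2 + Fintype.card F + 1 := by
    rcases hN with h | h
    · rw [h]
    · rw [← h]; exact dvd_mul_left _ _
  have dP := W_orbit_dvd M n hn hN' hq P
  have dQ := W_orbit_dvd M n hn hN' hq Q
  have hdis : Disjoint (MulAction.orbit M P) (MulAction.orbit M Q) := by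
    rw [Set.disjoint_left]
    intro R h1 h2
    apply hPQ
    rw [← MulAction.orbit_eq_iff] at h1 h2
    rw [← h1, h2]
    exact MulAction.mem_orbit_self Q
  have hfin : Finite (ℙ F (Fin 3 → F)) := inferInstance
  have hsum : Nat.card (MulAction.orbit M P) + Nat.card (MulAction.orbit M Q) ≤
      Fintype.card F ^ 2 + Fintype.card F + 1 := by
    rw [← W_card_P]
    change (MulAction.orbit M P).ncard + (MulAction.orbit M Q).ncard ≤ _
    rw [← Set.ncard_union_eq hdis (Set.toFinite _) (Set.toFinite _), ← Set.ncard_univ]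
    exact Set.ncard_le_ncard (Set.subset_univ _) (Set.toFinite _)
  have pP : 0 < Nat.card (MulAction.orbit M P) :=
    Nat.card_pos_iff.2 ⟨⟨⟨P, MulAction.mem_orbit_self P⟩⟩, inferInstance⟩
  have pQ : 0 < Nat.card (MulAction.orbit M Q) :=
    Nat.card_pos_iff.2 ⟨⟨⟨Q, MulAction.mem_orbit_self Q⟩⟩, inferInstance⟩
  have key : ∀ R : ℙ F (Fin 3 → F), n ∣ Nat.card (MulAction.orbit M R) →
      0 < Nat.card (MulAction.orbit M R) →
      Nat.card (MulAction.orbit M R) + n ≤ Fintype.card F ^ 2 + Fintype.card F + 1 →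
      ∃ A ∈ MulAction.orbit M R, x • A = A := by
    intro R hd h0 hle
    have hnd : ¬ l ∣ Nat.card (MulAction.orbit M R) := by
      intro hlR
      obtain ⟨k, hk⟩ := hd
      rw [hk] at hlR h0 hle
      have hnpos : 0 < n := Nat.pos_of_mul_pos_right h0
      rcases (Nat.Prime.dvd_mul hl).1 hlR with h | h
      · exact hlN (h.trans hN')
      · have hk0 : 0 < k := Nat.pos_of_mul_pos_left h0
        have hk2 : k ≤ 2 := by
          rcases hN with e | e
          · rw [← e] at hle; nlinarith
          · rw [← e] at hle
            have : n * k ≤ n * 2 := by omega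
            exact Nat.le_of_mul_le_mul_left this hnpos
        have := hl.two_le
        have := Nat.le_of_dvd hk0 h
        omega
    haveI : Fintype (MulAction.orbit M R) := Fintype.ofFinite _
    haveI := Fact.mk hl
    rw [Nat.card_eq_fintype_card] at hnd
    obtain ⟨A, hA⟩ := Equiv.Perm.exists_fixed_point_of_prime (n := 1) hnd
      (σ := MulAction.toPermHom M (MulAction.orbit M R) ⟨x, hx⟩) (by
        rw [pow_one, ← map_pow]
        have : (⟨x, hx⟩ : M) ^ l = 1 := Subtype.ext hxl
        rw [this, map_one])
    refine ⟨A.1, A.2, ?_⟩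
    have := congrArg Subtype.val hA
    exact this
  have nP : n ≤ Nat.card (MulAction.orbit M P) := Nat.le_of_dvd pP dP
  have nQ : n ≤ Nat.card (MulAction.orbit M Q) := Nat.le_of_dvd pQ dQ
  obtain ⟨A, hA, eA⟩ := key P dP pP (by omega)
  obtain ⟨B, hB, eB⟩ := key Q dQ pQ (by omega)
  refine ⟨A, B, ?_, eA, eB⟩
  rintro rfl
  exact Set.disjoint_left.1 hdis hA hB

theorem W_two_fixed' [Fintype F] (x : Matrix.SpecialLinearGroup (Fin 3) F) (l : ℕ)
    (hxl : x ^ l = 1) (hF : ∀ a : F, a ^ l = 1 → a = 1)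
    (A B : ℙ F (Fin 3 → F)) (hAB : A ≠ B) (hA : x • A = A) (hB : x • B = B) :
    ∃ a f, (x : Matrix (Fin 3) (Fin 3) F) = 1 + vecMulVec a f := by
  induction A using Projectivization.ind with | _ u hu
  induction B using Projectivization.ind with | _ w hw
  rw [W_smul_iff] at hA hB
  have key : ∀ u : Fin 3 → F, u ≠ 0 →
      (∃ c : F, c ≠ 0 ∧ (x : Matrix (Fin 3) (Fin 3) F) *ᵥ u = c • u) →
      ((x : Matrix (Fin 3) (Fin 3) F) - 1) *ᵥ u = 0 := by
    rintro u hu ⟨c, hc, h⟩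
    have hp : ∀ k : ℕ, ((x ^ k : Matrix.SpecialLinearGroup (Fin 3) F) :
        Matrix (Fin 3) (Fin 3) F) *ᵥ u = c ^ k • u := by
      intro k
      induction k with
      | zero => simp
      | succ k ih =>
        rw [pow_succ, Matrix.SpecialLinearGroup.coe_mul, ← mulVec_mulVec, h, mulVec_smul, ih,
          smul_smul, pow_succ, mul_comm]
    have h1 := hp l
    rw [hxl, Matrix.SpecialLinearGroup.coe_one, one_mulVec] at h1
    have h2 : c = 1 := by
      apply hF
      obtain ⟨i, hi⟩ := Function.ne_iff.1 hu
      have := congrFun h1 i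
      simp only [Pi.smul_apply, smul_eq_mul] at this
      exact (mul_right_cancel₀ hi (by rw [one_mul]; exact this)).symm
    rw [sub_mulVec, h, h2, one_smul, one_mulVec, sub_self]
  have hcr : u ⨯₃ w ≠ 0 := by
    intro h
    obtain ⟨c, rfl⟩ := W_par h hu
    apply hAB
    rw [Projectivization.mk_eq_mk_iff']
    have hc : c ≠ 0 := by rintro rfl; simp at hw
    exact ⟨c⁻¹, by rw [smul_smul, inv_mul_cancel₀ hc, one_smul]⟩
  obtain ⟨a, f, h⟩ := W_rank1 hcr (key u hu hA) (key w hw hB)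
  exact ⟨a, f, by rw [← h]; abel⟩

end counting

section singer
open Matrix
open scoped LinearAlgebra.Projectivization

variable {F : Type*} [Field F]

theorem W_singer_elt [Fintype F] {E : Type*} [Field E] [Finite E] [Algebra F E]
    (b : Module.Basis (Fin 3) F E) (hE : Nat.card E = Fintype.card F ^ 3) :
    ∃ s : Matrix.SpecialLinearGroup (Fin 3) F, ∀ k : ℕ, (s : ProjSL 3 F) ^ k = 1 →
      ∃ z : F, z ^ 3 = 1 ∧ (z = 1 → Fintype.card F ^ 3 - 1 ∣ (Fintype.card F - 1) * k) ∧
        Fintype.card F ^ 3 - 1 ∣ (Fintype.card F - 1) * k * 3 := by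
  obtain ⟨ζ, hζ⟩ := IsCyclic.exists_generator (α := Eˣ)
  have ho := orderOf_eq_card_of_forall_mem_zpowers hζ
  rw [Nat.card_units, hE] at ho
  have hdet : (Algebra.leftMulMatrix b ((ζ : E) ^ (Fintype.card F - 1))).det = 1 := by
    rw [← Algebra.norm_eq_matrix_det, map_pow]
    apply FiniteField.pow_card_sub_one_eq_one
    haveI : Module.Finite F E := Module.Finite.of_basis b
    exact Algebra.norm_ne_zero_iff.2 ζ.ne_zero
  obtain ⟨s, hs⟩ : ∃ s : Matrix.SpecialLinearGroup (Fin 3) F, (s : Matrix (Fin 3) (Fin 3) F) =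
      Algebra.leftMulMatrix b ((ζ : E) ^ (Fintype.card F - 1)) := ⟨⟨_, hdet⟩, rfl⟩
  refine ⟨s, ?_⟩
  intro k hk
  rw [← QuotientGroup.mk_pow, ← QuotientGroup.mk_one] at hk
  obtain ⟨z, hz, h⟩ := (W_mk_eq _ _).1 hk.symm
  rw [Matrix.SpecialLinearGroup.coe_pow, Matrix.SpecialLinearGroup.coe_one, hs] at h
  have h1 : (ζ : E) ^ ((Fintype.card F - 1) * k) = algebraMap F E z := by
    apply Algebra.leftMulMatrix_injective b
    rw [pow_mul, map_pow, h, AlgHom.commutes, Algebra.algebraMap_eq_smul_one]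
  refine ⟨z, hz, ?_, ?_⟩
  · rintro rfl
    rw [map_one] at h1
    rw [← ho, orderOf_dvd_iff_pow_eq_one]
    apply Units.ext
    simpa using h1
  · rw [← ho, orderOf_dvd_iff_pow_eq_one]
    apply Units.ext
    rw [pow_mul, Units.val_pow_eq_pow_val, Units.val_pow_eq_pow_val, h1, ← map_pow, hz]
    simp

theorem W_singer [Fintype F] (L : Subgroup (ProjSL 3 F))
    (hL : ∀ g : ProjSL 3 F, ∃ φ : ProjSL 3 F ≃* ProjSL 3 F, φ g ∈ L)
    {E : Type*} [Field E] [Finite E] [Algebra F E]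
    (b : Module.Basis (Fin 3) F E) (hE : Nat.card E = Fintype.card F ^ 3) :
    ∃ n : ℕ, n ∣ Nat.card (L.comap (QuotientGroup.mk' (Subgroup.center
      (Matrix.SpecialLinearGroup (Fin 3) F)))) ∧ (n = Fintype.card F ^ 2 + Fintype.card F + 1 ∨
      3 * n = Fintype.card F ^ 2 + Fintype.card F + 1) ∧ n.Coprime (Fintype.card F - 1) := by
  obtain ⟨s, hs⟩ := W_singer_elt b hE
  obtain ⟨z, hz, h1, h3⟩ := hs _ (pow_orderOf_eq_one _)
  have hord := W_ord L hL (s : ProjSL 3 F)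
  generalize orderOf (s : ProjSL 3 F) = k at *
  have hz0 : z ≠ 0 := by rintro rfl; simp at hz
  have hzq := FiniteField.pow_card_sub_one_eq_one z hz0
  obtain ⟨t, ht⟩ : ∃ t, Fintype.card F = t + 1 := ⟨Fintype.card F - 1, by
    have := Fintype.card_pos (α := F); omega⟩
  have ht0 : 0 < t := by
    have := Fintype.one_lt_card (α := F); omega
  rw [ht] at h1 h3 hzq ⊢
  rw [Nat.add_sub_cancel] at h1 h3 hzq ⊢
  have e0 : (t + 1) ^ 3 - 1 = t * ((t + 1) ^ 2 + (t + 1) + 1) :=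
    Nat.sub_eq_of_eq_add (by ring)
  rw [e0] at h1 h3
  rw [mul_assoc] at h3
  have h3' := Nat.dvd_of_mul_dvd_mul_left ht0 h3
  by_cases h : 3 ∣ t
  · obtain ⟨m, rfl⟩ := h
    refine ⟨3 * m ^ 2 + 3 * m + 1, ?_, Or.inr (by ring), ?_⟩
    · refine dvd_trans ?_ hord
      apply Nat.dvd_of_mul_dvd_mul_right (k := 3) (by norm_num)
      convert h3' using 1; ring
    · have : 3 * m ^ 2 + 3 * m + 1 = (3 * m) * (m + 1) + 1 := by ring
      rw [this]
      simp [Nat.coprime_mul_right_add_left]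
  · have hz1 : z = 1 := by
      have c : Nat.Coprime 3 t := (Nat.Prime.coprime_iff_not_dvd Nat.prime_three).2 h
      have d1 := orderOf_dvd_of_pow_eq_one hz
      have d2 := orderOf_dvd_of_pow_eq_one hzq
      exact orderOf_eq_one_iff.1 (Nat.eq_one_of_dvd_coprimes c d1 d2)
    refine ⟨_, (Nat.dvd_of_mul_dvd_mul_left ht0 (h1 hz1)).trans hord, Or.inl rfl, ?_⟩
    have : (t + 1) ^ 2 + (t + 1) + 1 = (t + 3) * t + 3 := by ring
    rw [this, Nat.coprime_mul_right_add_left]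
    exact (Nat.Prime.coprime_iff_not_dvd Nat.prime_three).2 h

theorem W_pow_eq_one [Fintype F] (l : ℕ) (hl : l.Prime) (h : ¬ l ∣ Fintype.card F - 1) (a : F)
    (ha : a ^ l = 1) : a = 1 := by
  have h0 : a ≠ 0 := by rintro rfl; simp [hl.ne_zero] at ha
  have d1 := orderOf_dvd_of_pow_eq_one ha
  have d2 := orderOf_dvd_of_pow_eq_one (FiniteField.pow_card_sub_one_eq_one a h0)
  exact orderOf_eq_one_iff.1 (Nat.eq_one_of_dvd_coprimes ((Nat.Prime.coprime_iff_not_dvd hl).2 h) d1 d2)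

theorem W_odd [Fintype F] (p : ℕ) [hp : Fact p.Prime] [CharP F p] (hp2 : p ≠ 2)
    (L : Subgroup (ProjSL 3 F))
    (hL : ∀ g : ProjSL 3 F, ∃ φ : ProjSL 3 F ≃* ProjSL 3 F, φ g ∈ L) (n : ℕ)
    (hn : n ∣ Nat.card (L.comap (QuotientGroup.mk' (Subgroup.center
      (Matrix.SpecialLinearGroup (Fin 3) F)))))
    (hN : n = Fintype.card F ^ 2 + Fintype.card F + 1 ∨
      3 * n = Fintype.card F ^ 2 + Fintype.card F + 1)
    (hq : n.Coprime (Fintype.card F - 1)) (P Q : ℙ F (Fin 3 → F))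
    (hPQ : Q ∉ MulAction.orbit (L.comap (QuotientGroup.mk' (Subgroup.center
      (Matrix.SpecialLinearGroup (Fin 3) F)))) P) : False := by
  have hp3 : 3 ≤ p := by
    have := hp.out.two_le; omega
  have pw : ∀ N : Matrix (Fin 3) (Fin 3) F, N ^ 3 = 0 → (1 + N) ^ p = 1 := by
    intro N hN
    rw [add_pow_char_of_commute _ (Commute.one_left N), one_pow, pow_eq_zero_of_le hp3 hN,
      add_zero]
  let N0 : Matrix (Fin 3) (Fin 3) F := !![0,1,0;0,0,1;0,0,0]
  have hN3 : N0 ^ 3 = 0 := by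
    ext i j
    fin_cases i <;> fin_cases j <;> simp [N0, pow_succ, Matrix.mul_apply, Fin.sum_univ_three]
  have hN2 : N0 ^ 2 ≠ 0 := by
    intro h
    have := congrFun (congrFun h 0) 2
    simp [N0, pow_succ, Matrix.mul_apply, Fin.sum_univ_three] at this
  have hd : (1 + N0).det = 1 := by
    rw [Matrix.det_fin_three]; simp [N0]
  let u : Matrix.SpecialLinearGroup (Fin 3) F := ⟨1 + N0, hd⟩
  have hu1 : (u : ProjSL 3 F) ≠ 1 := by
    intro h
    obtain ⟨z, _, hz⟩ := (W_mk_eq 1 u).1 h.symm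
    have := congrFun (congrFun hz 0) 1
    simp [u, N0] at this
  have hup : (u : ProjSL 3 F) ^ p = 1 := by
    rw [← QuotientGroup.mk_pow]
    have : u ^ p = 1 := by
      apply Subtype.ext
      rw [Matrix.SpecialLinearGroup.coe_pow, Matrix.SpecialLinearGroup.coe_one]
      exact pw N0 hN3
    rw [this]; rfl
  obtain ⟨φ, hφ⟩ := hL (u : ProjSL 3 F)
  obtain ⟨y, N, hy, hyN, hN3'⟩ := W_lift (φ (u : ProjSL 3 F)) (by rw [← map_pow, hup, map_one])
  have hyp : y ^ p = 1 := by
    apply Subtype.ext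
    rw [Matrix.SpecialLinearGroup.coe_pow, Matrix.SpecialLinearGroup.coe_one, hyN]
    exact pw N hN3'
  have hpq : p ∣ Fintype.card F := by
    obtain ⟨m, _, hm⟩ := FiniteField.card F p
    rw [hm]; exact dvd_pow_self _ m.ne_zero
  have hlN : ¬ p ∣ Fintype.card F ^ 2 + Fintype.card F + 1 := by
    intro h
    have h2 : p ∣ Fintype.card F ^ 2 + Fintype.card F := 
      dvd_add (dvd_pow hpq (by norm_num)) hpq
    exact hp.out.one_lt.ne' (Nat.dvd_one.1 ((Nat.dvd_add_right h2).1 h))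
  have hl1 : ¬ p ∣ Fintype.card F - 1 := by
    intro h
    have := Nat.dvd_sub hpq h
    have h3 := Fintype.card_pos (α := F)
    rw [Nat.sub_sub_self h3] at this
    exact hp.out.one_lt.ne' (Nat.dvd_one.1 this)
  obtain ⟨A, B, hAB, hA, hB⟩ := W_two_fixed _ n hn hN hq P Q hPQ p hp.out hp2 hlN y
    (by rw [Subgroup.mem_comap]; change (y : ProjSL 3 F) ∈ L; rw [hy]; exact hφ) hyp
  obtain ⟨a, f, h⟩ := W_two_fixed' y p hyp (W_pow_eq_one p hp.out hl1) A B hAB hA hB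
  obtain ⟨h', ha, hf, rfl⟩ := W_tv_of_rank1 h (by
    rw [hy]; intro h; exact hu1 ((MulEquiv.map_eq_one_iff φ).1 h))
  apply W_C2 ha hf h'
  rw [hy]
  apply WC_map φ.symm
  rw [MulEquiv.symm_apply_apply]
  exact W_C1 hN3 hN2 u rfl

theorem W_even [Fintype F] [CharP F 2]
    (L : Subgroup (ProjSL 3 F))
    (hL : ∀ g : ProjSL 3 F, ∃ φ : ProjSL 3 F ≃* ProjSL 3 F, φ g ∈ L) (n : ℕ)
    (hn : n ∣ Nat.card (L.comap (QuotientGroup.mk' (Subgroup.center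
      (Matrix.SpecialLinearGroup (Fin 3) F)))))
    (hN : n = Fintype.card F ^ 2 + Fintype.card F + 1 ∨
      3 * n = Fintype.card F ^ 2 + Fintype.card F + 1)
    (hq : n.Coprime (Fintype.card F - 1)) (P Q : ℙ F (Fin 3 → F))
    (hPQ : Q ∉ MulAction.orbit (L.comap (QuotientGroup.mk' (Subgroup.center
      (Matrix.SpecialLinearGroup (Fin 3) F)))) P) : False := by
  haveI : Fact (Nat.Prime 2) := ⟨Nat.prime_two⟩
  have hpq : 2 ∣ Fintype.card F := by
    obtain ⟨m, _, hm⟩ := FiniteField.card F 2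
    rw [hm]; exact dvd_pow_self _ m.ne_zero
  obtain ⟨r, hr, hrq⟩ := Nat.exists_prime_and_dvd (n := Fintype.card F + 1) (by
    have := Fintype.card_pos (α := F); omega)
  have hr2 : r ≠ 2 := by rintro rfl; omega
  have hr1 : ¬ r ∣ Fintype.card F - 1 := by
    intro h
    have := Nat.dvd_sub hrq h
    have h3 := Fintype.card_pos (α := F)
    have h4 : Fintype.card F + 1 - (Fintype.card F - 1) = 2 := by omega
    rw [h4] at this
    exact hr2 ((Nat.prime_dvd_prime_iff_eq hr Nat.prime_two).1 this)
  have hlN : ¬ r ∣ Fintype.card F ^ 2 + Fintype.card F + 1 := by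
    intro h
    have e : Fintype.card F ^ 2 + Fintype.card F + 1 = Fintype.card F * (Fintype.card F + 1) + 1 := by
      ring
    rw [e] at h
    exact hr.one_lt.ne' (Nat.dvd_one.1 ((Nat.dvd_add_right (Dvd.dvd.mul_left hrq _)).1 h))
  haveI : Fact r.Prime := ⟨hr⟩
  have hSL : r ∣ Nat.card (Matrix.SpecialLinearGroup (Fin 3) F) := by
    have h := W_card_SL_dvd' (F := F)
    rw [W_card_GL] at h
    have h2 : r ∣ _ := dvd_trans (Dvd.dvd.mul_left (Dvd.dvd.mul_left hrq _) _) h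
    exact ((Nat.Prime.dvd_mul hr).1 h2).resolve_right hr1
  obtain ⟨t, ht⟩ := exists_prime_orderOf_dvd_card' r hSL
  have htr : t ^ r = 1 := by rw [← ht]; exact pow_orderOf_eq_one t
  have hsc := W_pow_eq_one (F := F) r hr hr1
  have hot : orderOf (t : ProjSL 3 F) = r := by
    refine orderOf_eq_prime ?_ ?_
    · rw [← QuotientGroup.mk_pow, htr]; rfl
    · intro h
      obtain ⟨z, _, hz⟩ := (W_mk_eq 1 t).1 h.symm
      rw [Matrix.SpecialLinearGroup.coe_one] at hz
      have h2 := congrArg Subtype.val htr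
      rw [Matrix.SpecialLinearGroup.coe_pow, hz, smul_pow, one_pow] at h2
      have h3 := congrFun (congrFun h2 0) 0
      have hz1 : z = 1 := hsc z (by simpa using h3)
      have : t = 1 := by
        apply Subtype.ext
        rw [hz, hz1, one_smul, Matrix.SpecialLinearGroup.coe_one]
      rw [this, orderOf_one] at ht
      exact hr.one_lt.ne ht
  have hM := W_ord L hL (t : ProjSL 3 F)
  rw [hot] at hM
  obtain ⟨x, hx⟩ := exists_prime_orderOf_dvd_card' r hM
  have hxr' : x ^ r = 1 := by rw [← hx]; exact pow_orderOf_eq_one x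
  have hxr : x.1 ^ r = 1 := congrArg Subtype.val hxr'
  obtain ⟨A, B, hAB, hA, hB⟩ := W_two_fixed _ n hn hN hq P Q hPQ r hr hr2 hlN x.1 x.2 hxr
  obtain ⟨a, f, h⟩ := W_two_fixed' x.1 r hxr hsc A B hAB hA hB
  have hd : f ⬝ᵥ a = 0 := by
    have h1 := W_det_one_add a f
    rw [← h, x.1.2] at h1
    simpa using h1
  have hxe : x.1 = Wtv a f hd := Subtype.ext h
  have hx2 : x.1 ^ 2 = 1 := by rw [hxe]; exact W_tv_pow hd
  have hx2' : x ^ 2 = 1 := Subtype.ext hx2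
  have := orderOf_dvd_of_pow_eq_one hx2'
  rw [hx] at this
  exact hr2 ((Nat.prime_dvd_prime_iff_eq hr Nat.prime_two).1 this)

theorem W_main [Fintype F] {E : Type*} [Field E] [Finite E] [Algebra F E]
    (b : Module.Basis (Fin 3) F E) (hE : Nat.card E = Fintype.card F ^ 3)
    (L : Subgroup (ProjSL 3 F))
    (hL : ∀ g : ProjSL 3 F, ∃ φ : ProjSL 3 F ≃* ProjSL 3 F, φ g ∈ L) : L = ⊤ := by
  obtain ⟨n, hn, hN, hq⟩ := W_singer L hL b hE
  obtain ⟨p, hpc⟩ := CharP.exists F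
  haveI hp : Fact p.Prime := ⟨CharP.char_is_prime F p⟩
  have htr : ∀ P Q : ℙ F (Fin 3 → F), Q ∈ MulAction.orbit (L.comap (QuotientGroup.mk'
      (Subgroup.center (Matrix.SpecialLinearGroup (Fin 3) F)))) P := by
    intro P Q
    by_contra hPQ
    by_cases h2 : p = 2
    · subst h2
      exact W_even L hL n hn hN hq P Q hPQ
    · exact W_odd p h2 L hL n hn hN hq P Q hPQ
  have hM := W_core (M := L.comap (QuotientGroup.mk'
      (Subgroup.center (Matrix.SpecialLinearGroup (Fin 3) F)))) (by
    intro v w hv hw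
    obtain ⟨g, hg⟩ := htr (Projectivization.mk F v hv) (Projectivization.mk F w hw)
    exact ⟨g.1, g.2, (W_smul_iff g.1 hv hw).1 hg⟩) (W_partB L hL)
  rw [eq_top_iff]
  intro g _
  obtain ⟨x, rfl⟩ := QuotientGroup.mk'_surjective _ g
  rw [← Subgroup.mem_comap, hM]
  exact Subgroup.mem_top x

end singer

section cover
open Matrix Polynomial
open scoped LinearAlgebra.Projectivization

variable {F : Type*} [Field F]

/-- Conjugation by an invertible matrix on the special linear group. -/
noncomputable def WcSL (P R : Matrix (Fin 3) (Fin 3) F) (h1 : P * R = 1) (h2 : R * P = 1) :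
    Matrix.SpecialLinearGroup (Fin 3) F ≃* Matrix.SpecialLinearGroup (Fin 3) F where
  toFun x := ⟨P * x.1 * R, by
    rw [det_mul, det_mul, x.2, mul_one, ← det_mul, h1, det_one]⟩
  invFun x := ⟨R * x.1 * P, by
    rw [det_mul, det_mul, x.2, mul_one, ← det_mul, h2, det_one]⟩
  left_inv x := by
    apply Subtype.ext
    change R * (P * x.1 * R) * P = x.1
    calc R * (P * x.1 * R) * P = (R * P) * x.1 * (R * P) := by simp only [Matrix.mul_assoc]
      _ = x.1 := by rw [h2, one_mul, mul_one]
  right_inv x := by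
    apply Subtype.ext
    change P * (R * x.1 * P) * R = x.1
    calc P * (R * x.1 * P) * R = (P * R) * x.1 * (P * R) := by simp only [Matrix.mul_assoc]
      _ = x.1 := by rw [h1, one_mul, mul_one]
  map_mul' x y := by
    apply Subtype.ext
    change P * (x.1 * y.1) * R = (P * x.1 * R) * (P * y.1 * R)
    calc P * (x.1 * y.1) * R = P * x.1 * 1 * y.1 * R := by simp only [Matrix.mul_assoc, mul_one, one_mul]
      _ = _ := by rw [← h2]; simp only [Matrix.mul_assoc]

theorem W_aut (P : Matrix (Fin 3) (Fin 3) F) (hP : P.det ≠ 0)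
    (x y : Matrix.SpecialLinearGroup (Fin 3) F)
    (h : (y : Matrix (Fin 3) (Fin 3) F) * P = P * (x : Matrix (Fin 3) (Fin 3) F)) :
    ∃ φ : ProjSL 3 F ≃* ProjSL 3 F, φ (x : ProjSL 3 F) = (y : ProjSL 3 F) := by
  have h1 : P * P⁻¹ = 1 := Matrix.mul_nonsing_inv _ (Ne.isUnit hP)
  have h2 : P⁻¹ * P = 1 := Matrix.nonsing_inv_mul _ (Ne.isUnit hP)
  refine ⟨QuotientGroup.congr _ _ (WcSL P P⁻¹ h1 h2)
    (Subgroup.characteristic_iff_map_eq.1 inferInstance _), ?_⟩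
  have e : WcSL P P⁻¹ h1 h2 x = y := by
    apply Subtype.ext
    change P * x.1 * P⁻¹ = y.1
    rw [← h, Matrix.mul_assoc, h1, mul_one]
  rw [← e]
  rfl

theorem W_comp {f : F[X]} (hf : Irreducible f) (hm : f.Monic) (hd : f.natDegree = 3)
    (A : Matrix (Fin 3) (Fin 3) F) (hA : aeval A f = 0) :
    ∃ T : Matrix (Fin 3) (Fin 3) F, T.det ≠ 0 ∧
      A * T = T * !![0,0,-f.coeff 0;1,0,-f.coeff 1;0,1,-f.coeff 2] := by
  let v : Fin 3 → F := Pi.single 0 1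
  have hv : v ≠ 0 := by
    intro h
    have := congrFun h 0
    simp [v] at this
  let T : Matrix (Fin 3) (Fin 3) F := Matrix.of fun i j => ((A ^ (j : ℕ)) *ᵥ v) i
  have hc3 : f.coeff 3 = 1 := by rw [← hd]; exact hm
  refine ⟨T, ?_, ?_⟩
  · intro h0
    obtain ⟨u, hu, hTu⟩ := Matrix.exists_mulVec_eq_zero_iff.2 h0
    let g : F[X] := C (u 0) + C (u 1) * X + C (u 2) * X ^ 2
    have hg : (aeval A g) *ᵥ v = 0 := by
      rw [← hTu]
      ext i
      simp only [g, map_add, map_mul, map_pow, aeval_C, aeval_X, Algebra.algebraMap_eq_smul_one,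
        add_mulVec, smul_mul_assoc, one_mul, smul_mulVec, Pi.add_apply, Pi.smul_apply, smul_eq_mul]
      simp [T, mulVec, dotProduct, Fin.sum_univ_three]
      ring
    have hg0 : g ≠ 0 := by
      intro h
      apply hu
      have e : ∀ n, g.coeff n = 0 := by intro n; rw [h]; simp
      have e0 := e 0
      have e1 := e 1
      have e2 := e 2
      simp [g, coeff_X, coeff_C, coeff_X_pow] at e0 e1 e2
      ext i
      fin_cases i <;> simp [e0, e1, e2]
    have hgd : g.natDegree < f.natDegree := by
      rw [hd]
      have : g.natDegree ≤ 2 := by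
        simp only [g]; compute_degree
      omega
    have hnd : ¬ f ∣ g := fun h => absurd (natDegree_le_of_dvd h hg0) (by omega)
    obtain ⟨r, s, hrs⟩ := (hf.coprime_iff_not_dvd.2 hnd)
    have := congrArg (fun k => (aeval A k) *ᵥ v) hrs
    simp only [map_add, map_mul, hA, mul_zero, zero_add, map_one, one_mulVec, ← mulVec_mulVec, hg,
      mulVec_zero] at this
    exact hv this.symm
  · have h3 : A ^ 3 = - (f.coeff 0 • (1 : Matrix (Fin 3) (Fin 3) F) + f.coeff 1 • A
        + f.coeff 2 • A ^ 2) := by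
      rw [aeval_eq_sum_range, hd] at hA
      simp only [Finset.sum_range_succ, Finset.range_zero, Finset.sum_empty, zero_add, hc3,
        one_smul, pow_zero, pow_one] at hA
      exact eq_neg_of_add_eq_zero_right hA
    have hcol : ∀ i j, (A * T) i j = ((A ^ ((j : ℕ) + 1)) *ᵥ v) i := by
      intro i j
      rw [pow_succ', ← mulVec_mulVec]
      rfl
    ext i j
    rw [hcol]
    fin_cases j
    · simp [T, Matrix.mul_apply, Fin.sum_univ_three]
    · simp [T, Matrix.mul_apply, Fin.sum_univ_three]
    · change ((A ^ 3) *ᵥ v) i = _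
      rw [h3]
      simp only [neg_mulVec, add_mulVec, smul_mulVec, Pi.neg_apply, Pi.add_apply, Pi.smul_apply,
        smul_eq_mul]
      simp [T, Matrix.mul_apply, Fin.sum_univ_three]
      ring

theorem W_cover {E : Type*} [Field E] [Algebra F E]
    (b : Module.Basis (Fin 3) F E)
    (hroot : ∀ f : F[X], Irreducible f → f.natDegree = 3 → ∃ a : E, aeval a f = 0) :
    ∃ H K : Subgroup (ProjSL 3 F), H ≠ ⊤ ∧ K ≠ ⊤ ∧
        ∀ g : ProjSL 3 F,
          ∃ φ : ProjSL 3 F ≃* ProjSL 3 F, φ g ∈ H ∨ φ g ∈ K := by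
  let e0 : Fin 3 → F := Pi.single 0 1
  let e1 : Fin 3 → F := Pi.single 1 1
  have he0 : e0 ≠ 0 := by
    intro h; have := congrFun h 0; simp [e0] at this
  have he1 : e1 ≠ 0 := by
    intro h; have := congrFun h 1; simp [e1] at this
  have he : e0 ⬝ᵥ e1 = 0 := by simp [e0, e1]
  let π := QuotientGroup.mk' (Subgroup.center (Matrix.SpecialLinearGroup (Fin 3) F))
  let K0 : Subgroup (Matrix.SpecialLinearGroup (Fin 3) F) :=
    ((Units.map ((Algebra.leftMulMatrix b : E →ₐ[F] _) : E →* Matrix (Fin 3) (Fin 3) F)).range).comap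
      Matrix.SpecialLinearGroup.toGL
  refine ⟨(MulAction.stabilizer (Matrix.SpecialLinearGroup (Fin 3) F)
    (Projectivization.mk F e0 he0)).map π, K0.map π, ?_, ?_, ?_⟩
  · intro h
    have hx : π (Wtv e1 e0 he) ∈ (⊤ : Subgroup (ProjSL 3 F)) := Subgroup.mem_top _
    rw [← h] at hx
    obtain ⟨y, hy, hyx⟩ := hx
    obtain ⟨c, _, hc⟩ := (W_smul_iff y he0 he0).1 hy
    obtain ⟨z, _, hz⟩ := (W_mk_eq y (Wtv e1 e0 he)).1 hyx
    have h1 := congrFun hc 1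
    have h2 := congrFun (congrFun hz 1) 0
    simp [e0] at h1
    simp [Wtv, e0, e1, h1, vecMulVec_apply] at h2
  · intro h
    apply W_C2 he1 he0 he
    have hc : ∀ a b : ProjSL 3 F, a * b = b * a := by
      intro a b
      have ha : a ∈ (⊤ : Subgroup (ProjSL 3 F)) := Subgroup.mem_top _
      have hb : b ∈ (⊤ : Subgroup (ProjSL 3 F)) := Subgroup.mem_top _
      rw [← h] at ha hb
      obtain ⟨x, ⟨s, hs⟩, rfl⟩ := ha
      obtain ⟨y, ⟨t, ht⟩, rfl⟩ := hb
      rw [← map_mul, ← map_mul]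
      congr 1
      apply W_toGL_inj
      rw [map_mul, map_mul, ← hs, ← ht, ← map_mul, ← map_mul, mul_comm]
    intro a b _ _
    exact hc a b
  · intro g
    obtain ⟨x, rfl⟩ := QuotientGroup.mk'_surjective _ g
    by_cases hr : ∃ c : F, (x : Matrix (Fin 3) (Fin 3) F).charpoly.eval c = 0
    · obtain ⟨c, hc⟩ := hr
      rw [Matrix.eval_charpoly] at hc
      obtain ⟨v, hv, hxv⟩ := Matrix.exists_mulVec_eq_zero_iff.2 hc
      have hxv' : (x : Matrix (Fin 3) (Fin 3) F) *ᵥ v = c • v := by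
        rw [sub_mulVec, sub_eq_zero] at hxv
        rw [← hxv]
        ext i
        simp [Matrix.scalar_apply, mulVec_diagonal]
      haveI : MulAction.IsPretransitive (Matrix.SpecialLinearGroup (Fin 3) F)
        (ℙ F (Fin 3 → F)) := inferInstance
      obtain ⟨g, hg⟩ := MulAction.exists_smul_eq (Matrix.SpecialLinearGroup (Fin 3) F)
        (Projectivization.mk F v hv) (Projectivization.mk F e0 he0)
      have hc0 : c ≠ 0 := by
        rintro rfl
        rw [zero_smul] at hxv'
        have : (x : Matrix (Fin 3) (Fin 3) F).det = 0 :=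
          Matrix.exists_mulVec_eq_zero_iff.1 ⟨v, hv, hxv'⟩
        rw [x.2] at this
        exact one_ne_zero this
      have hfix := (W_smul_iff x hv hv).2 ⟨c, hc0, hxv'⟩
      refine ⟨MulAut.conj (π g), Or.inl ⟨g * x * g⁻¹, ?_, ?_⟩⟩
      · change (g * x * g⁻¹) • Projectivization.mk F e0 he0 = Projectivization.mk F e0 he0
        rw [← hg, mul_smul, mul_smul, inv_smul_smul, hfix]
      · rw [MulAut.conj_apply, map_mul, map_mul, map_inv]
    · push Not at hr
      have hm := Matrix.charpoly_monic (x : Matrix (Fin 3) (Fin 3) F)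
      have hd : (x : Matrix (Fin 3) (Fin 3) F).charpoly.natDegree = 3 := by
        rw [Matrix.charpoly_natDegree_eq_dim]; simp
      have hirr : Irreducible (x : Matrix (Fin 3) (Fin 3) F).charpoly := by
        rw [hm.irreducible_iff_roots_eq_zero_of_degree_le_three (by omega) (by omega)]
        rw [Multiset.eq_zero_iff_forall_notMem]
        intro c hc
        exact hr c (isRoot_of_mem_roots hc)
      obtain ⟨a, ha⟩ := hroot _ hirr hd
      obtain ⟨T, hT, hxT⟩ := W_comp hirr hm hd (x : Matrix (Fin 3) (Fin 3) F)
        (Matrix.aeval_self_charpoly _)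
      obtain ⟨S, hS, haS⟩ := W_comp hirr hm hd (Algebra.leftMulMatrix b a) (by
        rw [aeval_algHom_apply, ha, map_zero])
      have hT1 : T * T⁻¹ = 1 := Matrix.mul_nonsing_inv _ (Ne.isUnit hT)
      have hT2 : T⁻¹ * T = 1 := Matrix.nonsing_inv_mul _ (Ne.isUnit hT)
      have hP : (S * T⁻¹).det ≠ 0 := by
        rw [det_mul]
        refine mul_ne_zero hS ?_
        intro h
        have := congrArg Matrix.det hT2
        rw [det_mul, h, zero_mul, det_one] at this
        exact zero_ne_one this
      have hint : Algebra.leftMulMatrix b a * (S * T⁻¹) =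
          (S * T⁻¹) * (x : Matrix (Fin 3) (Fin 3) F) := by
        calc Algebra.leftMulMatrix b a * (S * T⁻¹)
            = (Algebra.leftMulMatrix b a * S) * T⁻¹ := by rw [Matrix.mul_assoc]
          _ = S * (T⁻¹ * (x : Matrix (Fin 3) (Fin 3) F) * T) * T⁻¹ := by
            rw [haS, Matrix.mul_assoc T⁻¹, hxT, ← Matrix.mul_assoc T⁻¹, hT2, one_mul]
          _ = (S * T⁻¹) * (x : Matrix (Fin 3) (Fin 3) F) * (T * T⁻¹) := by
            simp only [Matrix.mul_assoc]
          _ = _ := by rw [hT1, mul_one]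
      have hdet : (Algebra.leftMulMatrix b a).det = 1 := by
        have := congrArg Matrix.det hint
        rw [det_mul, det_mul _ x.1, x.2, mul_one] at this
        exact mul_right_cancel₀ hP (by rw [one_mul]; exact this)
      have ha0 : a ≠ 0 := by
        rintro rfl
        rw [map_zero, det_zero] at hdet
        exact zero_ne_one hdet
      obtain ⟨φ, hφ⟩ := W_aut (S * T⁻¹) hP x ⟨_, hdet⟩ hint
      refine ⟨φ, Or.inr ?_⟩
      refine ⟨⟨_, hdet⟩, ⟨Units.mk0 a ha0, ?_⟩, hφ.symm⟩
      apply Units.ext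
      rfl

end cover


/-- **The weak normal covering number of `PSL₃(q)` equals 2** for every prime power `q`. -/
theorem gammaW_PSL3_eq_two (q : ℕ) (hq : IsPrimePow q)
    (F : Type*) [Field F] [Fintype F] (hF : Fintype.card F = q) :
    (∃ H K : Subgroup (ProjSL 3 F), H ≠ ⊤ ∧ K ≠ ⊤ ∧
        ∀ g : ProjSL 3 F,
          ∃ φ : ProjSL 3 F ≃* ProjSL 3 F, φ g ∈ H ∨ φ g ∈ K) ∧
      ¬ ∃ L : Subgroup (ProjSL 3 F), L ≠ ⊤ ∧
          ∀ g : ProjSL 3 F,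
            ∃ φ : ProjSL 3 F ≃* ProjSL 3 F, φ g ∈ L := by
  obtain ⟨p, hpc⟩ := CharP.exists F
  haveI hp : Fact p.Prime := ⟨CharP.char_is_prime F p⟩
  have hfr := FiniteField.finrank_extension F p 3
  have hcard := FiniteField.natCard_extension F p 3
  rw [Nat.card_eq_fintype_card (α := F)] at hcard
  let b : Module.Basis (Fin 3) F (FiniteField.Extension F p 3) :=
    Module.finBasisOfFinrankEq F _ hfr
  constructor
  · refine W_cover b ?_
    intro f hf hd
    haveI : Fact (Irreducible f) := ⟨hf⟩
    have hfin : Module.finrank F (AdjoinRoot f) = 3 := by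
      rw [(AdjoinRoot.powerBasis hf.ne_zero).finrank, AdjoinRoot.powerBasis_dim, hd]
    refine ⟨FiniteField.algEquivExtension F p 3 (AdjoinRoot f) hfin (AdjoinRoot.root f), ?_⟩
    rw [Polynomial.aeval_algHom_apply, AdjoinRoot.aeval_eq, AdjoinRoot.mk_self, map_zero]
  · rintro ⟨L, hL, h⟩
    exact hL (W_main b hcard L h)
end
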